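/- Let g be a semisimple Lie algebra over an algebraically closed field of characteristic zero with center Z(g) ⊆ U(g) of the universal enveloping algebra. Then U(g) is free (in particular flat) as a module over Z(g). -/

import Mathlib

/-! ## Part A: reflection groups, freeness over the invariants (Chevalley) -/
namespace KFree

open MvPolynomial

section PartA

variable {k : Type*} [Field k] {ι Φ : Type*} [Fintype ι]

/-- the linear form attached to a vector -/
noncomputable def lin : (ι → k) →ₗ[k] MvPolynomial ι k where
  toFun v := ∑ i, C (v i) * X i
  map_add' v w := by simp [add_mul, Finset.sum_add_distrib]
  map_smul' c v := by simp [Finset.smul_sum, smul_eq_C_mul, mul_assoc]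

lemma lin_apply (v : ι → k) : lin v = ∑ i, C (v i) * (X i : MvPolynomial ι k) := rfl

lemma lin_homog (v : ι → k) : (lin v : MvPolynomial ι k).IsHomogeneous 1 := by
  rw [lin_apply]
  refine IsHomogeneous.sum _ _ _ fun i _ => ?_
  simpa using (isHomogeneous_C ι (v i)).mul (isHomogeneous_X k i)

lemma lin_coeff [DecidableEq ι] (v : ι → k) (i : ι) :
    coeff (Finsupp.single i 1) (lin v : MvPolynomial ι k) = v i := by
  rw [lin_apply, coeff_sum]
  simp [coeff_C_mul, coeff_X, Finsupp.single_left_inj]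

lemma lin_ne_zero {v : ι → k} (h : v ≠ 0) : (lin v : MvPolynomial ι k) ≠ 0 := by
  classical
  intro h0
  apply h
  ext i
  rw [← lin_coeff v i, h0]; simp

/-- the pairing of vectors and covectors -/
def dotp (f v : ι → k) : k := ∑ i, f i * v i

/-- the substitution `x ↦ x - f(x) v` -/
noncomputable def shear (f v : ι → k) : MvPolynomial ι k →ₐ[k] MvPolynomial ι k :=
  aeval fun i => X i - C (f i) * lin v

lemma shear_X (f v : ι → k) (i : ι) : shear f v (X i) = X i - C (f i) * lin v := by
  simp [shear]

lemma shear_lin (f v w : ι → k) : shear f v (lin w) = lin w - C (dotp f w) * lin v := by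
  rw [lin_apply w, map_sum]
  simp only [map_mul, algHom_C, shear_X, dotp, map_sum, Finset.sum_mul, mul_sub,
    Finset.sum_sub_distrib, algebraMap_eq]
  congr 1
  refine Finset.sum_congr rfl fun i _ => by ring

lemma shear_homog (f v : ι → k) {q : MvPolynomial ι k} {n : ℕ} (hq : q.IsHomogeneous n) :
    (shear f v q).IsHomogeneous n := by
  have := hq.aeval (n := 1) (fun i => X i - C (f i) * lin v) (fun i => by
    refine (isHomogeneous_X k i).sub ?_
    simpa using (isHomogeneous_C ι (f i)).mul (lin_homog v))
  simpa [shear] using this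

lemma shear_refl {f v : ι → k} (h2 : dotp f v = 2) (q : MvPolynomial ι k) :
    shear f v (shear f v q) = q := by
  have : (shear f v).comp (shear f v) = AlgHom.id k _ := by
    ext1 i
    simp only [AlgHom.comp_apply, shear_X, map_sub, map_mul, algHom_C, shear_lin, h2,
      AlgHom.id_apply, algebraMap_eq]
    have : (C (2 : k) : MvPolynomial ι k) = 2 := map_ofNat C 2
    rw [this]; ring
  exact DFunLike.congr_fun this q

lemma shear_lin_self {f v : ι → k} (h2 : dotp f v = 2) :
    shear f v (lin v) = - lin v := by
  rw [shear_lin, h2]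
  have : (C (2 : k) : MvPolynomial ι k) = 2 := map_ofNat C 2
  rw [this]; ring

lemma demazure_exists_monomial (f v : ι → k) (s : ι →₀ ℕ) :
    ∃ g : MvPolynomial ι k, lin v * g = monomial s 1 - shear f v (monomial s 1) ∧
      (s.degree = 0 → g = 0) ∧ (∀ n, s.degree = n + 1 → g.IsHomogeneous n) := by
  classical
  induction s using Finsupp.induction_linear with
  | zero => exact ⟨0, by simp, by simp, by simp⟩
  | single i n =>
    induction n with
    | zero => exact ⟨0, by simp, by simp, by simp⟩
    | succ n ih =>
      obtain ⟨g, h1, h2, h3⟩ := ih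
      refine ⟨X i * g + C (f i) * shear f v (monomial (Finsupp.single i n) 1), ?_, ?_, ?_⟩
      · have e : (monomial (Finsupp.single i (n+1)) (1:k)) =
          X i * monomial (Finsupp.single i n) 1 := by
          rw [X, monomial_mul, ← Finsupp.single_add, add_comm 1 n]; simp
        rw [e, map_mul, shear_X]
        linear_combination X i * h1
      · simp
      · intro m hm
        have hm' : n = m := by simpa using hm
        subst hm'
        refine IsHomogeneous.add ?_ ?_
        · rcases n with _ | n
          · rw [h2 (by simp)]; simpa using isHomogeneous_zero ι k _
          · have := (isHomogeneous_X k i).mul (h3 n (by simp))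
            rwa [add_comm] at this
        · have := (isHomogeneous_C ι (f i)).mul (shear_homog f v
            (isHomogeneous_monomial (1:k) (show (Finsupp.single i n).degree = n by simp)))
          simpa using this
  | add s t hs ht =>
    obtain ⟨g, h1, h2, h3⟩ := hs
    obtain ⟨g', h1', h2', h3'⟩ := ht
    have hmul : (monomial (s + t) (1:k)) = monomial s 1 * monomial t 1 := by
      rw [monomial_mul]; simp
    refine ⟨g * monomial t 1 + shear f v (monomial s 1) * g', ?_, ?_, ?_⟩
    · rw [hmul, map_mul]
      linear_combination monomial t 1 * h1 + shear f v (monomial s 1) * h1'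
    · intro h
      rw [map_add] at h
      rw [h2 (by omega), h2' (by omega)]; simp
    · intro n hn
      rw [map_add] at hn
      refine IsHomogeneous.add ?_ ?_
      · rcases hsd : s.degree with _ | a
        · rw [h2 hsd]; simpa using isHomogeneous_zero ι k _
        · have := (h3 a hsd).mul (isHomogeneous_monomial (1:k) (rfl : t.degree = t.degree))
          convert this using 1; omega
      · rcases htd : t.degree with _ | a
        · rw [h2' htd]; simpa using isHomogeneous_zero ι k _
        · have := (shear_homog f v (isHomogeneous_monomial (1:k) (rfl : s.degree = s.degree))).mul
            (h3' a htd)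
          convert this using 1; omega

lemma homog_induction {n : ℕ} {P : MvPolynomial ι k → Prop} (h0 : P 0)
    (hadd : ∀ p q, P p → P q → P (p + q)) (hmon : ∀ s c, s.degree = n → P (monomial s c))
    {q : MvPolynomial ι k} (hq : q.IsHomogeneous n) : P q := by
  classical
  rw [q.as_sum]
  refine Finset.sum_induction _ P hadd h0 fun s hs => hmon _ _ ?_
  have := hq (mem_support_iff.mp hs)
  rw [Finsupp.degree_eq_weight_one]; exact this

/-- the divided difference operator -/
lemma demazure_exists (f v : ι → k) :
    ∃ T : MvPolynomial ι k →ₗ[k] MvPolynomial ι k, (∀ q, lin v * T q = q - shear f v q) ∧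
      (∀ q, q.IsHomogeneous 0 → T q = 0) ∧
      (∀ n q, q.IsHomogeneous (n+1) → (T q).IsHomogeneous n) := by
  classical
  choose g h1 h2 h3 using demazure_exists_monomial (k := k) f v
  let T := (basisMonomials ι k).constr k g
  have hT : ∀ s, T (monomial s 1) = g s := fun s => by
    have := (basisMonomials ι k).constr_basis k g s
    simpa using this
  have hT' : ∀ s (c : k), T (monomial s c) = c • g s := fun s c => by
    rw [← hT, ← map_smul, smul_monomial, smul_eq_mul, mul_one]
  refine ⟨T, fun q => ?_, fun q hq => ?_, fun n q hq => ?_⟩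
  · induction q using MvPolynomial.monomial_add_induction_on with
    | C a =>
      have : (C a : MvPolynomial ι k) = monomial 0 a := rfl
      rw [this, hT', h2 0 (by simp)]
      rw [← this]; simp
    | monomial_add s c q _ _ ih =>
      have e : monomial s c = c • (monomial s (1:k)) := by simp [smul_monomial]
      rw [map_add, mul_add, ih, hT', map_add, mul_smul_comm, h1, e, map_smul, smul_sub]
      ring
  · refine homog_induction (P := fun q => T q = 0) (by simp)
      (fun p q hp hq => by rw [map_add, hp, hq, add_zero]) (fun s c hs => ?_) hq
    rw [hT', h2 s hs, smul_zero]
  · refine homog_induction (P := fun q => (T q).IsHomogeneous n) (by simpa using isHomogeneous_zero ι k _)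
      (fun p q hp hq => by rw [map_add]; exact hp.add hq) (fun s c hs => ?_) hq
    rw [hT', smul_eq_C_mul]
    simpa using (isHomogeneous_C ι c).mul (h3 s n hs)

variable (rt ct : Φ → ι → k)

/-- the algebra of invariants of the reflections `x ↦ x - rt(x) ct` -/
noncomputable def invs : Subalgebra k (MvPolynomial ι k) where
  carrier := {q | ∀ α, shear (rt α) (ct α) q = q}
  mul_mem' {a b} ha hb α := by rw [map_mul, ha α, hb α]
  add_mem' {a b} ha hb α := by rw [map_add, ha α, hb α]
  algebraMap_mem' c α := by rw [AlgHom.commutes]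

lemma mem_invs {q : MvPolynomial ι k} :
    q ∈ invs rt ct ↔ ∀ α, shear (rt α) (ct α) q = q := Iff.rfl

/-- degree `d` part of the ideal generated by invariants of positive degree -/
noncomputable def invIdeal (d : ℕ) : Submodule k (MvPolynomial ι k) :=
  Submodule.span k {p | ∃ a b r q, a + b = d ∧ 0 < a ∧ r ∈ invs rt ct ∧ r.IsHomogeneous a ∧
    q.IsHomogeneous b ∧ p = r * q}

lemma invIdeal_shear {d : ℕ} (α : Φ) {p : MvPolynomial ι k} (hp : p ∈ invIdeal rt ct d) :
    shear (rt α) (ct α) p ∈ invIdeal rt ct d := by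
  induction hp using Submodule.span_induction with
  | mem p hp =>
    obtain ⟨a, b, r, q, hab, ha, hr, hra, hq, rfl⟩ := hp
    rw [map_mul, hr α]
    exact Submodule.subset_span ⟨a, b, r, _, hab, ha, hr, hra, shear_homog _ _ hq, rfl⟩
  | zero => simp
  | add x y _ _ hx hy => rw [map_add]; exact add_mem hx hy
  | smul c x _ hx => rw [map_smul]; exact Submodule.smul_mem _ _ hx

lemma invIdeal_lin {d : ℕ} (v : ι → k) {p : MvPolynomial ι k} (hp : p ∈ invIdeal rt ct d) :
    lin v * p ∈ invIdeal rt ct (d + 1) := by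
  induction hp using Submodule.span_induction with
  | mem p hp =>
    obtain ⟨a, b, r, q, hab, ha, hr, hra, hq, rfl⟩ := hp
    refine Submodule.subset_span ⟨a, 1 + b, r, lin v * q, by omega, ha, hr, hra,
      (lin_homog v).mul hq, by ring⟩
  | zero => simp
  | add x y _ _ hx hy => rw [mul_add]; exact add_mem hx hy
  | smul c x _ hx => rw [mul_smul_comm]; exact Submodule.smul_mem _ _ hx

lemma invIdeal_zero {p : MvPolynomial ι k} (hp : p ∈ invIdeal rt ct 0) : p = 0 := by
  induction hp using Submodule.span_induction with
  | mem p hp =>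
    obtain ⟨a, b, r, q, hab, ha, hr, hra, hq, rfl⟩ := hp
    omega
  | zero => simp
  | add x y _ _ hx hy => rw [hx, hy, add_zero]
  | smul c x _ hx => rw [hx, smul_zero]

/-- the monoid generated by the reflections -/
noncomputable def reflMonoid : Submonoid (MvPolynomial ι k →ₐ[k] MvPolynomial ι k) :=
  Submonoid.closure (Set.range fun α => shear (rt α) (ct α))

lemma mem_invIdeal_of_forall [CharZero k] [Finite (reflMonoid rt ct)]
    (h2 : ∀ α, dotp (rt α) (ct α) = 2) {d : ℕ} (hd : 0 < d)
    {q : MvPolynomial ι k} (hq : q.IsHomogeneous d)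
    (h : ∀ α, q - shear (rt α) (ct α) q ∈ invIdeal rt ct d) : q ∈ invIdeal rt ct d := by
  classical
  have := Fintype.ofFinite (reflMonoid rt ct)
  have key : ∀ g ∈ reflMonoid rt ct, (∀ p ∈ invIdeal rt ct d, g p ∈ invIdeal rt ct d) ∧
      (g q).IsHomogeneous d ∧ q - g q ∈ invIdeal rt ct d := by
    intro g hg
    induction hg using Submonoid.closure_induction_left with
    | one => exact ⟨fun p hp => hp, hq, by simp⟩
    | mul_left x hx y hy ih =>
      obtain ⟨α, rfl⟩ := hx
      obtain ⟨ih1, ih2, ih3⟩ := ih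
      refine ⟨fun p hp => ?_, ?_, ?_⟩
      · rw [AlgHom.mul_apply]; exact invIdeal_shear rt ct α (ih1 p hp)
      · rw [AlgHom.mul_apply]; exact shear_homog (rt α) (ct α) ih2
      have e : q - (shear (rt α) (ct α) * y) q = (q - shear (rt α) (ct α) q) +
        shear (rt α) (ct α) (q - y q) := by
        rw [AlgHom.mul_apply, map_sub]; ring
      rw [e]
      exact add_mem (h α) (invIdeal_shear rt ct α ih3)
  set N : k := (Fintype.card (reflMonoid rt ct) : k) with hN
  have hN0 : N ≠ 0 := by
    rw [hN]; exact_mod_cast (Fintype.card_ne_zero (α := reflMonoid rt ct))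
  set A := ∑ g : reflMonoid rt ct, g.1 q with hA
  have hAinv : A ∈ invs rt ct := by
    intro α
    rw [hA, map_sum]
    let s : reflMonoid rt ct := ⟨shear (rt α) (ct α), Submonoid.subset_closure ⟨α, rfl⟩⟩
    have hs : ∀ g, s * (s * g) = g := by
      intro g
      apply Subtype.ext
      apply AlgHom.ext
      intro p
      rw [Submonoid.coe_mul, Submonoid.coe_mul, AlgHom.mul_apply, AlgHom.mul_apply]
      exact shear_refl (h2 α) (g.1 p)
    refine Fintype.sum_bijective (fun g => s * g)
      (Function.Involutive.bijective hs) _ _ fun g => by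
        rw [Submonoid.coe_mul, AlgHom.mul_apply]
  have hAh : A.IsHomogeneous d := IsHomogeneous.sum _ _ _ fun g _ => (key g.1 g.2).2.1
  have hAI : A ∈ invIdeal rt ct d :=
    Submodule.subset_span ⟨d, 0, A, 1, rfl, hd, hAinv, hAh, isHomogeneous_one ι k, by simp⟩
  have hs : ∑ g : reflMonoid rt ct, (q - g.1 q) ∈ invIdeal rt ct d :=
    sum_mem fun g _ => (key g.1 g.2).2.2
  rw [Finset.sum_sub_distrib, ← hA, Finset.sum_const, Finset.card_univ] at hs
  have h3 : (Fintype.card (reflMonoid rt ct)) • q ∈ invIdeal rt ct d := by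
    simpa using add_mem hs hAI
  have h4 : N⁻¹ • (N • q) ∈ invIdeal rt ct d := by
    refine Submodule.smul_mem _ _ ?_
    rw [hN, Nat.cast_smul_eq_nsmul]; exact h3
  rwa [smul_smul, inv_mul_cancel₀ hN0, one_smul] at h4

lemma exists_operator [CharZero k] [Finite (reflMonoid rt ct)]
    (h2 : ∀ α, dotp (rt α) (ct α) = 2) (d : ℕ) :
    ∀ q : MvPolynomial ι k, q.IsHomogeneous d → q ∉ invIdeal rt ct d →
    ∃ T : MvPolynomial ι k →ₗ[k] MvPolynomial ι k, (∀ r ∈ invs rt ct, ∀ p, T (r * p) = r * T p) ∧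
      (∀ n, n < d → ∀ p : MvPolynomial ι k, p.IsHomogeneous n → T p = 0) ∧
      (∀ n, ∀ p : MvPolynomial ι k, p.IsHomogeneous (d + n) → (T p).IsHomogeneous n) ∧
      T q ≠ 0 := by
  induction d with
  | zero =>
    intro q hq hqI
    refine ⟨LinearMap.id, by simp, by simp, by simp, ?_⟩
    rintro h
    apply hqI
    have : q = 0 := h
    rw [this]; exact zero_mem _
  | succ d ih =>
    intro q hq hqI
    have : ∃ α, q - shear (rt α) (ct α) q ∉ invIdeal rt ct (d+1) := by
      by_contra! hc
      exact hqI (mem_invIdeal_of_forall rt ct h2 (Nat.succ_pos d) hq hc)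
    obtain ⟨α, hα⟩ := this
    obtain ⟨D, hD1, hD2, hD3⟩ := demazure_exists (rt α) (ct α)
    have hDq : D q ∉ invIdeal rt ct d := by
      intro h
      apply hα
      rw [← hD1]
      exact invIdeal_lin rt ct _ h
    obtain ⟨T, hT1, hT2, hT3, hT4⟩ := ih (D q) (hD3 d q hq) hDq
    have hne : (lin (ct α) : MvPolynomial ι k) ≠ 0 := by
      apply lin_ne_zero
      intro h
      have := h2 α
      rw [h] at this
      simp [dotp] at this
    refine ⟨T ∘ₗ D, fun r hr p => ?_, fun n hn p hp => ?_, fun n p hp => ?_, hT4⟩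
    · have : D (r * p) = r * D p := by
        apply mul_left_cancel₀ hne
        rw [hD1, map_mul, hr α]
        linear_combination -r * hD1 p
      rw [LinearMap.comp_apply, this, hT1 r hr]; rfl
    · rcases n with _ | n
      · rw [LinearMap.comp_apply, hD2 p hp, map_zero]
      · exact hT2 n (by omega) _ (hD3 n p hp)
    · refine hT3 n _ (hD3 (d + n) p ?_)
      convert hp using 1; omega

/-- Chevalley's theorem: the polynomial ring is free over the invariants, with a basis of
monomials, in a graded sense. -/
theorem chevalley_free [CharZero k] [Finite (reflMonoid rt ct)]
    (h2 : ∀ α, dotp (rt α) (ct α) = 2) :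
    ∃ E : Set (ι →₀ ℕ),
      (∀ d, ∀ q : MvPolynomial ι k, q.IsHomogeneous d → q ∈ Submodule.span k
        {p | ∃ a, ∃ e ∈ E, ∃ r ∈ invs rt ct, r.IsHomogeneous a ∧ a + e.degree = d ∧
          p = r * monomial e 1}) ∧
      (∀ r : (ι →₀ ℕ) →₀ MvPolynomial ι k, (∀ e ∈ r.support, e ∈ E ∧ r e ∈ invs rt ct) →
        (r.sum fun e c => c * monomial e 1) = 0 → r = 0) := by
  classical
  have hex : ∀ d, ∃ F : Set (ι →₀ ℕ), (∀ e ∈ F, e.degree = d) ∧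
      (∀ q : MvPolynomial ι k, q.IsHomogeneous d →
        q ∈ Submodule.span k ((fun e => monomial e (1:k)) '' F) ⊔ invIdeal rt ct d) ∧
      (∀ c : (ι →₀ ℕ) →₀ k, (∀ e ∈ c.support, e ∈ F) →
        (c.sum fun e x => monomial e x) ∈ invIdeal rt ct d → c = 0) := by
    intro d
    let v : {e : ι →₀ ℕ // e.degree = d} → (MvPolynomial ι k ⧸ invIdeal rt ct d) :=
      fun e => (invIdeal rt ct d).mkQ (monomial e.1 1)
    obtain ⟨κ, a, ha, hspan, hli⟩ := exists_linearIndependent' k v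
    refine ⟨Set.range fun x => (a x).1, ?_, ?_, ?_⟩
    · rintro _ ⟨x, rfl⟩; exact (a x).2
    · intro q hq
      refine homog_induction (P := fun q => q ∈ Submodule.span k _ ⊔ invIdeal rt ct d)
        (zero_mem _) (fun p q hp hq => add_mem hp hq) (fun s c hs => ?_) hq
      have e : monomial s c = c • (monomial s (1:k)) := by simp [smul_monomial]
      rw [e]
      apply Submodule.smul_mem
      have h1 : v ⟨s, hs⟩ ∈ Submodule.span k (Set.range (v ∘ a)) := by
        rw [hspan]; exact Submodule.subset_span ⟨_, rfl⟩
      have h2 : Set.range (v ∘ a) = (invIdeal rt ct d).mkQ ''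
          ((fun e => monomial e (1:k)) '' (Set.range fun x => (a x).1)) := by
        rw [← Set.range_comp, ← Set.range_comp]; rfl
      rw [h2, ← Submodule.map_span] at h1
      obtain ⟨y, hy, hy2⟩ := h1
      have h3 : monomial s (1:k) - y ∈ invIdeal rt ct d := by
        rw [← Submodule.Quotient.eq]; exact hy2.symm
      have : monomial s (1:k) = y + (monomial s (1:k) - y) := by ring
      rw [this]
      exact Submodule.add_mem_sup hy h3
    · intro c hc hI
      rw [linearIndependent_iff] at hli
      have hinj : Function.Injective (fun x => (a x).1) := Subtype.val_injective.comp ha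
      obtain ⟨c', rfl⟩ : ∃ c' : κ →₀ k, c'.mapDomain (fun x => (a x).1) = c := by
        refine ⟨c.comapDomain _ hinj.injOn, Finsupp.mapDomain_comapDomain _ hinj c ?_⟩
        intro e he; exact hc e he
      rw [Finsupp.sum_mapDomain_index (by simp) (by simp)] at hI
      have := hli c' (by
        rw [Finsupp.linearCombination_apply]
        have h5 := (Submodule.Quotient.mk_eq_zero _).mpr hI
        rw [← Submodule.mkQ_apply, Finsupp.sum, map_sum] at h5
        rw [Finsupp.sum, ← h5]
        refine Finset.sum_congr rfl fun x _ => ?_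
        have e : monomial (a x).1 (c' x) = (c' x) • (monomial (a x).1 (1:k)) := by
          simp [smul_monomial]
        rw [e, map_smul]; rfl)
      rw [this]; simp
  choose F hF1 hF2 hF3 using hex
  refine ⟨{e | e ∈ F e.degree}, ?_, ?_⟩
  · intro d
    induction d using Nat.strong_induction_on with
    | _ d ih =>
    intro q hq
    obtain ⟨y, hy, z, hz, rfl⟩ := Submodule.mem_sup.mp (hF2 d q hq)
    refine add_mem ?_ ?_
    · refine Submodule.span_le.mpr ?_ hy
      rintro _ ⟨e, he, rfl⟩
      have hed := hF1 d e he
      refine Submodule.subset_span ⟨0, e, ?_, 1, one_mem _, isHomogeneous_one ι k, by omega,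
        by simp⟩
      show e ∈ F e.degree
      rw [hed]; exact he
    · refine Submodule.span_le.mpr ?_ hz
      rintro _ ⟨a, b, r, p, hab, ha, hr, hra, hp, rfl⟩
      have := ih b (by omega) p hp
      simp only [SetLike.mem_coe]
      clear hz hy hp hq
      induction this using Submodule.span_induction with
      | mem x hx =>
        obtain ⟨a', e, he, r', hr', hra', hae, rfl⟩ := hx
        exact Submodule.subset_span ⟨a + a', e, he, r * r', mul_mem hr hr', hra.mul hra',
          by omega, by ring⟩
      | zero => simp
      | add x y _ _ hx hy => rw [mul_add]; exact add_mem hx hy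
      | smul c x _ hx => rw [mul_smul_comm]; exact Submodule.smul_mem _ _ hx
  · intro r hr hsum
    by_contra hne
    have hsupp : r.support.Nonempty := Finsupp.support_nonempty_iff.mpr hne
    obtain ⟨e0, he0, hmax⟩ := r.support.exists_max_image (fun e => e.degree) hsupp
    have hre0 : r e0 ≠ 0 := Finsupp.mem_support_iff.mp he0
    obtain ⟨u, hu⟩ := MvPolynomial.ne_zero_iff.mp hre0
    set d := e0.degree with hd
    let c : (ι →₀ ℕ) →₀ k := Finsupp.onFinset (r.support.filter fun e => e.degree = d)
      (fun e => if e.degree = d then coeff u (r e) else 0) (by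
        intro e he
        simp only [ne_eq, ite_eq_right_iff, Classical.not_imp] at he
        rw [Finset.mem_filter, Finsupp.mem_support_iff]
        refine ⟨fun h => he.2 (by rw [h]; simp), he.1⟩)
    have hcsum : (c.sum fun e x => monomial e x) =
        ∑ e ∈ r.support.filter (fun e => e.degree = d), monomial e (coeff u (r e)) := by
      rw [Finsupp.onFinset_sum _ (by simp)]
      refine Finset.sum_congr rfl fun e he => ?_
      rw [if_pos (Finset.mem_filter.mp he).2]
    have hc0 : c ≠ 0 := by
      intro h
      have : c e0 = 0 := by rw [h]; rfl
      rw [Finsupp.onFinset_apply, if_pos rfl] at this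
      exact hu this
    have hcF : ∀ e ∈ c.support, e ∈ F d := by
      intro e he
      have h1 := Finsupp.support_onFinset_subset he
      rw [Finset.mem_filter] at h1
      have := (hr e h1.1).1
      rw [← h1.2]; exact this
    have hnI : (c.sum fun e x => monomial e x) ∉ invIdeal rt ct d :=
      fun h => hc0 (hF3 d c hcF h)
    have hh : (c.sum fun e x => monomial e x).IsHomogeneous d := by
      rw [hcsum]
      refine IsHomogeneous.sum _ _ _ fun e he => ?_
      exact isHomogeneous_monomial _ (Finset.mem_filter.mp he).2
    obtain ⟨T, hT1, hT2, hT3, hT4⟩ := exists_operator rt ct h2 d _ hh hnI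
    apply hT4
    -- apply T to the relation
    have h5 : ∑ e ∈ r.support.filter (fun e => e.degree = d), r e * T (monomial e 1) = 0 := by
      have h6 := congrArg T hsum
      rw [Finsupp.sum, map_sum, map_zero] at h6
      rw [Finset.sum_filter]
      refine Eq.trans (Finset.sum_congr rfl fun e he => ?_) h6
      rw [hT1 _ (hr e he).2]
      split_ifs with h
      · rfl
      · rw [hT2 e.degree (lt_of_le_of_ne (hmax e he) h) _ (isHomogeneous_monomial _ rfl), mul_zero]
    have hconst : ∀ e : ι →₀ ℕ, e.degree = d → T (monomial e 1) = C (coeff 0 (T (monomial e 1))) := by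
      intro e he
      have := hT3 0 (monomial e 1) (isHomogeneous_monomial _ he)
      rwa [← totalDegree_zero_iff_isHomogeneous, totalDegree_eq_zero_iff_eq_C] at this
    have h7 := congrArg (coeff u) h5
    rw [coeff_sum] at h7
    rw [hcsum, map_sum]
    have : ∑ e ∈ r.support.filter (fun e => e.degree = d), T (monomial e (coeff u (r e))) =
      C (∑ e ∈ r.support.filter (fun e => e.degree = d), coeff u (r e * T (monomial e 1))) := by
      rw [map_sum]
      refine Finset.sum_congr rfl fun e he => ?_
      have hed := (Finset.mem_filter.mp he).2
      have e' : monomial e (coeff u (r e)) = (coeff u (r e)) • (monomial e (1:k)) := by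
        simp [smul_monomial]
      rw [e', map_smul, hconst e hed, mul_comm (r e), coeff_C_mul, smul_eq_C_mul, ← C_mul, mul_comm]
    rw [this, h7]; simp

end PartA

end KFree


set_option linter.unusedSectionVars false
set_option linter.unusedVariables false

/-! ## Part C: symmetrization and PBW -/
namespace KFree

open MvPolynomial

section PartC1

variable {k : Type*} [Field k] {I : Type*} [Fintype I] {A : Type*} [Ring A] [Algebra k A]

/-- degree `n` symmetrization -/
noncomputable def tauN (u : I → A) : ℕ → MvPolynomial I k →ₗ[k] A
  | 0 => (Algebra.linearMap k A) ∘ₗ lcoeff (R := k) 0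
  | n + 1 => ((n + 1 : k)⁻¹) • ∑ i, (LinearMap.mulLeft k (u i)) ∘ₗ (tauN u n) ∘ₗ
      (pderiv i : Derivation k (MvPolynomial I k) (MvPolynomial I k)).toLinearMap

/-- symmetrization -/
noncomputable def tau (u : I → A) : MvPolynomial I k →ₗ[k] A :=
  (basisMonomials I k).constr k fun s => tauN (k := k) u s.degree (monomial s (1 : k))

lemma tauN_zero (u : I → A) (p : MvPolynomial I k) : tauN u 0 p = algebraMap k A (coeff 0 p) := rfl

lemma tauN_succ (u : I → A) (n : ℕ) (p : MvPolynomial I k) :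
    tauN u (n+1) p = ((n + 1 : k)⁻¹) • ∑ i, u i * tauN u n (pderiv i p) := by
  simp [tauN, LinearMap.sum_apply]

lemma monomial_eq_smul (s : I →₀ ℕ) (c : k) : monomial s c = c • (monomial s (1:k)) := by
  simp [smul_monomial]

lemma tau_eq_tauN (u : I → A) {n : ℕ} {p : MvPolynomial I k} (hp : p.IsHomogeneous n) :
    tau u p = tauN u n p := by
  refine homog_induction (P := fun p => tau u p = tauN u n p) (by simp)
      (fun p q hp hq => by rw [map_add, map_add, hp, hq]) (fun s c hs => ?_) hp
  rw [monomial_eq_smul, map_smul, map_smul]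
  congr 1
  have := (basisMonomials I k).constr_basis k (fun s => tauN u s.degree (monomial s (1:k))) s
  subst hs
  simpa [tau] using this

lemma tau_one (u : I → A) : tau u (1 : MvPolynomial I k) = 1 := by
  rw [tau_eq_tauN u (isHomogeneous_one I k), tauN_zero]; simp

lemma tau_C (u : I → A) (c : k) : tau u (C c : MvPolynomial I k) = algebraMap k A c := by
  rw [tau_eq_tauN u (isHomogeneous_C I c), tauN_zero]; simp

variable [CharZero k]

lemma tau_rec (u : I → A) {n : ℕ} {p : MvPolynomial I k} (hp : p.IsHomogeneous (n+1)) :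
    (n + 1 : k) • tau u p = ∑ i, u i * tau u (pderiv i p) := by
  rw [tau_eq_tauN u hp, tauN_succ, smul_smul, mul_inv_cancel₀ (by exact_mod_cast Nat.succ_ne_zero n),
    one_smul]
  refine Finset.sum_congr rfl fun i _ => ?_
  rw [tau_eq_tauN u (n := n) (by simpa using hp.pderiv (i := i))]

lemma pderiv_comm' (i j : I) (p : MvPolynomial I k) :
    pderiv i (pderiv j p) = pderiv j (pderiv i p) := by
  classical
  have : ⁅(pderiv i : Derivation k (MvPolynomial I k) (MvPolynomial I k)), (pderiv j : Derivation k (MvPolynomial I k) (MvPolynomial I k))⁆ = 0 := by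
    apply derivation_ext
    intro l
    rw [Derivation.commutator_apply]
    simp only [pderiv_X, Pi.single_apply]
    split_ifs <;> simp
  have h := DFunLike.congr_fun this p
  rw [Derivation.commutator_apply] at h
  exact sub_eq_zero.mp h

lemma tau_rec_right (u : I → A) {n : ℕ} : ∀ {p : MvPolynomial I k}, p.IsHomogeneous (n+1) →
    (n + 1 : k) • tau u p = ∑ i, tau u (pderiv i p) * u i := by
  induction n with
  | zero =>
    intro p hp
    rw [tau_rec u hp]
    refine Finset.sum_congr rfl fun i _ => ?_
    rw [tau_eq_tauN u (n := 0) (by simpa using hp.pderiv (i := i)), tauN_zero]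
    exact (Algebra.commutes _ _).symm
  | succ n ih =>
    intro p hp
    have hn : (n + 1 : k) ≠ 0 := by exact_mod_cast Nat.succ_ne_zero n
    rw [tau_rec u hp]
    have h1 : ∀ i, (pderiv i p).IsHomogeneous (n + 1) := fun i => by simpa using hp.pderiv (i := i)
    refine smul_right_injective _ hn ?_
    simp only [Finset.smul_sum]
    have e1 : ∀ i, (n + 1 : k) • (u i * tau u (pderiv i p)) =
        ∑ j, u i * (tau u (pderiv j (pderiv i p)) * u j) := fun i => by
      rw [← mul_smul_comm, ih (h1 i), Finset.mul_sum]
    have e2 : ∀ i, (n + 1 : k) • (tau u (pderiv i p) * u i) =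
        ∑ j, (u j * (tau u (pderiv j (pderiv i p)))) * u i := fun i => by
      rw [← smul_mul_assoc, tau_rec u (h1 i), Finset.sum_mul]
    simp only [e1, e2]
    rw [Finset.sum_comm]
    refine Finset.sum_congr rfl fun i _ => Finset.sum_congr rfl fun j _ => ?_
    rw [mul_assoc, pderiv_comm' i j]

/-- span of words of weight less than `m` -/
def FW (k : Type*) [Field k] [Algebra k A] (u : I → A) (w : I → ℕ) (m : ℕ) : Submodule k A :=
  Submodule.span k {a | ∃ l : List I, (l.map w).sum < m ∧ a = (l.map u).prod}

variable (u : I → A) (w : I → ℕ)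

lemma FW_mono {m n : ℕ} (h : m ≤ n) : FW k u w m ≤ FW k u w n :=
  Submodule.span_mono fun a ⟨l, hl, ha⟩ => ⟨l, by omega, ha⟩

lemma FW_mul {m n r : ℕ} (h : m + n ≤ r + 1) {a b : A} (ha : a ∈ FW k u w m) (hb : b ∈ FW k u w n) :
    a * b ∈ FW k u w r := by
  induction ha using Submodule.span_induction with
  | zero => simp
  | add x y _ _ hx hy => rw [add_mul]; exact add_mem hx hy
  | smul c x _ hx => rw [smul_mul_assoc]; exact Submodule.smul_mem _ _ hx
  | mem x hx =>
    obtain ⟨l, hl, rfl⟩ := hx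
    induction hb using Submodule.span_induction with
    | zero => simp
    | add x y _ _ hx hy => rw [mul_add]; exact add_mem hx hy
    | smul c x _ hx => rw [mul_smul_comm]; exact Submodule.smul_mem _ _ hx
    | mem y hy =>
      obtain ⟨l', hl', rfl⟩ := hy
      refine Submodule.subset_span ⟨l ++ l', ?_, by simp⟩
      simp only [List.map_append, List.sum_append]; omega

lemma u_mem_FW {i : I} {m : ℕ} (h : w i < m) : u i ∈ FW k u w m :=
  Submodule.subset_span ⟨[i], by simpa using h, by simp⟩

lemma one_mem_FW {m : ℕ} (h : 0 < m) : (1 : A) ∈ FW k u w m :=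
  Submodule.subset_span ⟨[], by simpa using h, by simp⟩

lemma FW_mul_left {m r : ℕ} (i : I) (h : m + w i ≤ r) {b : A} (hb : b ∈ FW k u w m) :
    u i * b ∈ FW k u w r :=
  FW_mul u w (m := w i + 1) (n := m) (by omega) (u_mem_FW u w (by omega)) hb

lemma FW_zero {a : A} (ha : a ∈ FW k u w 0) : a = 0 := by
  have : FW k u w 0 = ⊥ := by
    rw [FW, Submodule.span_eq_bot]
    rintro x ⟨l, hl, -⟩
    omega
  rw [this] at ha; exact ha

/-- hypotheses for the filtration -/
def GoodComm (k : Type*) [Field k] [Algebra k A] (u : I → A) (w : I → ℕ) : Prop :=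
  (∀ i, 0 < w i) ∧ ∀ i j, u i * u j - u j * u i ∈ FW k u w (w i + w j)

variable {u w}

lemma comm_mem (hg : GoodComm k u w) (i : I) (m : ℕ) {a : A} (ha : a ∈ FW k u w (m + 1)) :
    u i * a - a * u i ∈ FW k u w (m + w i) := by
  induction ha using Submodule.span_induction with
  | zero => simp
  | add x y _ _ hx hy =>
    rw [mul_add, add_mul, add_sub_add_comm]; exact add_mem hx hy
  | smul c x _ hx =>
    rw [smul_mul_assoc, mul_smul_comm, ← smul_sub]; exact Submodule.smul_mem _ _ hx
  | mem x hx =>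
    obtain ⟨l, hl, rfl⟩ := hx
    induction l generalizing m with
    | nil => simp
    | cons j l ih =>
      simp only [List.map_cons, List.sum_cons, List.prod_cons] at hl ⊢
      have h1 := ih (m - w j) (by omega)
      have e : u i * (u j * (l.map u).prod) - u j * (l.map u).prod * u i =
        (u i * u j - u j * u i) * (l.map u).prod +
        u j * (u i * (l.map u).prod - (l.map u).prod * u i) := by noncomm_ring
      rw [e]
      refine add_mem ?_ (FW_mul_left u w j (by omega) h1)
      refine FW_mul u w (m := w i + w j) (n := m - w j + 1) (by omega) (hg.2 i j) ?_
      exact Submodule.subset_span ⟨l, by omega, rfl⟩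

lemma weight_sub_single {s : I →₀ ℕ} {i : I} (h : s i ≠ 0) :
    Finsupp.weight w (s - Finsupp.single i 1) + w i = Finsupp.weight w s := by
  have e : s - Finsupp.single i 1 + Finsupp.single i 1 = s :=
    tsub_add_cancel_of_le (by rwa [Finsupp.single_le_iff, Nat.one_le_iff_ne_zero])
  conv_rhs => rw [← e]
  rw [map_add, Finsupp.weight_single]; simp

lemma degree_sub_single {s : I →₀ ℕ} {i : I} (h : s i ≠ 0) :
    (s - Finsupp.single i 1).degree + 1 = s.degree := by
  have e : s - Finsupp.single i 1 + Finsupp.single i 1 = s :=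
    tsub_add_cancel_of_le (by rwa [Finsupp.single_le_iff, Nat.one_le_iff_ne_zero])
  conv_rhs => rw [← e]
  rw [map_add]; simp

lemma tau_monomial_mem (n : ℕ) : ∀ (s : I →₀ ℕ) (c : k), s.degree = n →
    tau u (monomial s c) ∈ FW k u w (Finsupp.weight w s + 1) := by
  induction n with
  | zero =>
    intro s c hs
    rw [Finsupp.degree_eq_zero_iff] at hs
    subst hs
    have : (monomial 0 c : MvPolynomial I k) = C c := rfl
    rw [this, tau_C, Algebra.algebraMap_eq_smul_one]
    exact Submodule.smul_mem _ _ (one_mem_FW u w (by simp))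
  | succ n ih =>
    intro s c hs
    have hn : (n + 1 : k) ≠ 0 := by exact_mod_cast Nat.succ_ne_zero n
    rw [← Submodule.smul_mem_iff _ hn, tau_rec u (isHomogeneous_monomial c hs)]
    refine sum_mem fun i _ => ?_
    rw [pderiv_monomial]
    by_cases h : s i = 0
    · simp [h]
    · have h1 := weight_sub_single (w := w) h
      have h2 := degree_sub_single h
      exact FW_mul_left u w i (by omega) (ih _ _ (by omega))

lemma tau_X (i : I) : tau u (X i : MvPolynomial I k) = u i := by
  classical
  have := tau_rec u (n := 0) (isHomogeneous_X k i)
  simp only [Nat.cast_zero, zero_add, one_smul] at this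
  rw [this, Finset.sum_eq_single i]
  · simp [tau_one]
  · intro j _ hj
    rw [pderiv_X_of_ne hj.symm]; simp
  · simp

lemma tau_X_mul (hg : GoodComm k u w) (j : I) (n : ℕ) : ∀ (s : I →₀ ℕ) (c : k), s.degree = n →
    u j * tau u (monomial s c) - tau u (X j * monomial s c) ∈
      FW k u w (Finsupp.weight w s + w j) := by
  classical
  induction n with
  | zero =>
    intro s c hs
    rw [Finsupp.degree_eq_zero_iff] at hs
    subst hs
    have : (monomial 0 c : MvPolynomial I k) = C c := rfl
    rw [this, tau_C, mul_comm (X j), ← smul_eq_C_mul, map_smul, tau_X, Algebra.algebraMap_eq_smul_one]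
    simp
  | succ n ih =>
    intro s c hs
    have hn : (n + 1 + 1 : k) ≠ 0 := by exact_mod_cast Nat.succ_ne_zero (n+1)
    have hh : (monomial s c).IsHomogeneous (n+1) := isHomogeneous_monomial c hs
    have hh2 : (X j * monomial s c).IsHomogeneous (n+1+1) := by
      have := (isHomogeneous_X k j).mul hh
      rwa [add_comm] at this
    rw [← Submodule.smul_mem_iff _ hn, smul_sub]
    have e1 := tau_rec u hh2
    push_cast at e1
    rw [e1]
    have e2 : ∑ i, u i * tau u (pderiv i (X j * monomial s c)) = u j * tau u (monomial s c) +
        ∑ i, u i * tau u (X j * pderiv i (monomial s c)) := by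
      have : ∀ i, u i * tau u (pderiv i (X j * monomial s c)) =
        (if i = j then u j * tau u (monomial s c) else 0) +
          u i * tau u (X j * pderiv i (monomial s c)) := by
        intro i
        rw [pderiv_mul, pderiv_X, Pi.single_apply, map_add, mul_add]
        congr 1
        split_ifs with h1 h2 h2
        · subst h1; simp
        · exact absurd h1.symm h2
        · exact absurd h2.symm h1
        · simp
      rw [Finset.sum_congr rfl fun i _ => this i, Finset.sum_add_distrib]
      simp
    rw [e2]
    have e3 : (n + 1 + 1 : k) • (u j * tau u (monomial s c)) =
        u j * tau u (monomial s c) + ∑ i, u j * (u i * tau u (pderiv i (monomial s c))) := by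
      rw [← Finset.mul_sum, ← tau_rec u hh, mul_smul_comm, add_smul, one_smul, add_comm]
    rw [e3, add_sub_add_left_eq_sub, ← Finset.sum_sub_distrib]
    refine sum_mem fun i _ => ?_
    rw [pderiv_monomial]
    by_cases h : s i = 0
    · simp [h]
    · have h1 := weight_sub_single (w := w) h
      have h2 := degree_sub_single h
      set t := s - Finsupp.single i 1
      set c' := c * (s i : k)
      have e4 : u j * (u i * tau u (monomial t c')) - u i * tau u (X j * monomial t c') =
        (u j * u i - u i * u j) * tau u (monomial t c') +
          u i * (u j * tau u (monomial t c') - tau u (X j * monomial t c')) := by noncomm_ring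
      rw [e4]
      refine add_mem ?_ (FW_mul_left u w i (by omega) (ih t c' (by omega)))
      exact FW_mul u w (by omega) (hg.2 j i) (tau_monomial_mem _ t c' rfl)

/-- polynomials of weight less than `m` -/
def Fil (k : Type*) [Field k] (w : I → ℕ) (m : ℕ) : Submodule k (MvPolynomial I k) where
  carrier := {p | ∀ s, coeff s p ≠ 0 → Finsupp.weight w s < m}
  add_mem' {p q} hp hq s hs := by
    by_cases h : coeff s p = 0
    · exact hq s fun h' => hs (by rw [coeff_add, h, h', add_zero])
    · exact hp s h
  zero_mem' s hs := by simp at hs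
  smul_mem' c p hp s hs := hp s fun h => hs (by rw [coeff_smul, h, smul_zero])

lemma mem_Fil {m : ℕ} {p : MvPolynomial I k} :
    p ∈ Fil k w m ↔ ∀ s, coeff s p ≠ 0 → Finsupp.weight w s < m := Iff.rfl

lemma monomial_mem_Fil {m : ℕ} {s : I →₀ ℕ} (h : Finsupp.weight w s < m) (c : k) :
    monomial s c ∈ Fil k w m := by
  classical
  intro t ht
  rw [coeff_monomial] at ht
  split_ifs at ht with h1
  · rwa [← h1]
  · simp at ht

lemma Fil_induction {m : ℕ} {P : MvPolynomial I k → Prop} (h0 : P 0)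
    (hadd : ∀ p q, P p → P q → P (p + q))
    (hmon : ∀ s c, Finsupp.weight w s < m → P (monomial s c))
    {q : MvPolynomial I k} (hq : q ∈ Fil k w m) : P q := by
  classical
  rw [q.as_sum]
  exact Finset.sum_induction _ P hadd h0 fun s hs => hmon _ _ (hq s (mem_support_iff.mp hs))

lemma Fil_mono {m n : ℕ} (h : m ≤ n) : Fil k w m ≤ Fil k w n :=
  fun p hp s hs => lt_of_lt_of_le (hp s hs) h

lemma Fil_mul {m n r : ℕ} (h : m + n ≤ r + 1) {p q : MvPolynomial I k} (hp : p ∈ Fil k w m)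
    (hq : q ∈ Fil k w n) : p * q ∈ Fil k w r := by
  refine Fil_induction (P := fun p => p * q ∈ Fil k w r) (by simp)
    (fun a b ha hb => by rw [add_mul]; exact add_mem ha hb) (fun s c hs => ?_) hp
  refine Fil_induction (P := fun q => monomial s c * q ∈ Fil k w r) (by simp)
    (fun a b ha hb => by rw [mul_add]; exact add_mem ha hb) (fun t d ht => ?_) hq
  rw [monomial_mul]
  refine monomial_mem_Fil ?_ _
  rw [map_add]; omega

lemma exists_Fil (p : MvPolynomial I k) : ∃ m, p ∈ Fil k w m := by
  refine ⟨(p.support.sup fun s => Finsupp.weight w s) + 1, fun s hs => ?_⟩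
  have := Finset.le_sup (f := fun s => Finsupp.weight w s) (mem_support_iff.mpr hs)
  omega

lemma Fil_zero {p : MvPolynomial I k} (h : p ∈ Fil k w 0) : p = 0 := by
  ext s
  by_contra hs
  exact absurd (h s (by simpa using hs)) (by omega)

lemma tau_mem_FW {m : ℕ} {p : MvPolynomial I k} (hp : p ∈ Fil k w m) : tau u p ∈ FW k u w m := by
  refine Fil_induction (P := fun p => tau u p ∈ FW k u w m) (by simp)
    (fun a b ha hb => by rw [map_add]; exact add_mem ha hb) (fun s c hs => ?_) hp
  exact FW_mono u w hs (tau_monomial_mem _ s c rfl)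

lemma tau_X_mul' (hg : GoodComm k u w) (j : I) {m : ℕ} {p : MvPolynomial I k}
    (hp : p ∈ Fil k w (m+1)) : u j * tau u p - tau u (X j * p) ∈ FW k u w (m + w j) := by
  refine Fil_induction (P := fun p => u j * tau u p - tau u (X j * p) ∈ FW k u w (m + w j))
    (by simp) (fun a b ha hb => ?_) (fun s c hs => ?_) hp
  · rw [map_add, mul_add, mul_add, map_add, add_sub_add_comm]; exact add_mem ha hb
  · exact FW_mono u w (by omega) (tau_X_mul hg j _ s c rfl)

lemma X_mul_mem_Fil (i : I) {m r : ℕ} (h : m + w i ≤ r) {p : MvPolynomial I k}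
    (hp : p ∈ Fil k w m) : X i * p ∈ Fil k w r :=
  Fil_mul (m := w i + 1) (by omega) (monomial_mem_Fil (by rw [Finsupp.weight_single]; simp) 1) hp

lemma FW_le_tau (hg : GoodComm k u w) (m : ℕ) : ∀ a ∈ FW k u w m, ∃ p ∈ Fil k w m, tau u p = a := by
  induction m using Nat.strong_induction_on with
  | _ m ih =>
    intro a ha
    induction ha using Submodule.span_induction with
    | zero => exact ⟨0, zero_mem _, map_zero _⟩
    | add x y _ _ hx hy =>
      obtain ⟨p, hp, rfl⟩ := hx
      obtain ⟨q, hq, rfl⟩ := hy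
      exact ⟨p + q, add_mem hp hq, map_add _ _ _⟩
    | smul c x _ hx =>
      obtain ⟨p, hp, rfl⟩ := hx
      exact ⟨c • p, Submodule.smul_mem _ _ hp, map_smul _ _ _⟩
    | mem x hx =>
      obtain ⟨l, hl, rfl⟩ := hx
      rcases l with _ | ⟨i, l⟩
      · exact ⟨1, monomial_mem_Fil (by simpa using hl) 1, by simp [tau_one]⟩
      · simp only [List.map_cons, List.sum_cons, List.prod_cons] at hl ⊢
        have hi := hg.1 i
        obtain ⟨n, rfl⟩ : ∃ n, m = n + w i + 1 := ⟨m - w i - 1, by omega⟩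
        obtain ⟨p, hp, hpl⟩ := ih (n + 1) (by omega) (l.map u).prod
          (Submodule.subset_span ⟨l, by omega, rfl⟩)
        obtain ⟨q, hq, hq2⟩ := ih (n + w i) (by omega) _ (tau_X_mul' hg i hp)
        refine ⟨X i * p + q, add_mem (X_mul_mem_Fil i (by omega) hp) (Fil_mono (by omega) hq), ?_⟩
        rw [map_add, hq2, hpl]; abel

lemma tau_mul_monomial (hg : GoodComm k u w) {n : ℕ} {q : MvPolynomial I k}
    (hq : q ∈ Fil k w (n+1)) (d : ℕ) : ∀ (s : I →₀ ℕ), s.degree = d →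
    tau u (monomial s (1:k)) * tau u q - tau u (monomial s 1 * q) ∈
      FW k u w (Finsupp.weight w s + n) := by
  induction d with
  | zero =>
    intro s hs
    rw [Finsupp.degree_eq_zero_iff] at hs
    subst hs
    have : (monomial 0 1 : MvPolynomial I k) = 1 := rfl
    rw [this, tau_one]; simp
  | succ d ih =>
    intro s hs
    obtain ⟨i, hi⟩ : ∃ i, s i ≠ 0 := by
      by_contra! h
      have : s = 0 := by ext i; simp [h i]
      simp [this] at hs
    have h1 := weight_sub_single (w := w) hi
    have h2 := degree_sub_single hi
    have e : monomial s (1:k) = X i * monomial (s - Finsupp.single i 1) (1:k) := by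
      rw [X, monomial_mul, add_comm, tsub_add_cancel_of_le (by
        rwa [Finsupp.single_le_iff, Nat.one_le_iff_ne_zero])]; simp
    set t := s - Finsupp.single i 1
    have e2 : tau u (monomial s (1:k)) * tau u q - tau u (monomial s (1:k) * q) =
      - (u i * tau u (monomial t (1:k)) - tau u (X i * monomial t (1:k))) * tau u q +
      u i * (tau u (monomial t (1:k)) * tau u q - tau u (monomial t (1:k) * q)) +
      (u i * tau u (monomial t (1:k) * q) - tau u (X i * (monomial t (1:k) * q))) := by
      rw [e, mul_assoc (X i)]; noncomm_ring
    rw [e2]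
    refine add_mem (add_mem ?_ ?_) ?_
    · exact FW_mul u w (by omega) (neg_mem (tau_X_mul hg i d t 1 (by omega))) (tau_mem_FW hq)
    · exact FW_mul_left u w i (by omega) (ih t (by omega))
    · refine FW_mono u w (by omega) (tau_X_mul' hg i (m := Finsupp.weight w t + n) ?_)
      exact Fil_mul (by omega) (monomial_mem_Fil (Nat.lt_succ_self _) 1) hq

lemma tau_mul (hg : GoodComm k u w) {m n : ℕ} {p q : MvPolynomial I k}
    (hp : p ∈ Fil k w (m+1)) (hq : q ∈ Fil k w (n+1)) :
    tau u p * tau u q - tau u (p * q) ∈ FW k u w (m + n) := by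
  refine Fil_induction (P := fun p => tau u p * tau u q - tau u (p * q) ∈ FW k u w (m + n))
    (by simp) (fun a b ha hb => ?_) (fun s c hs => ?_) hp
  · rw [map_add, add_mul, add_mul, map_add, add_sub_add_comm]; exact add_mem ha hb
  · rw [monomial_eq_smul, map_smul, smul_mul_assoc, smul_mul_assoc, map_smul, ← smul_sub]
    exact Submodule.smul_mem _ _ (FW_mono u w (by omega) (tau_mul_monomial hg hq _ s rfl))

end PartC1

end KFree


set_option linter.unusedSectionVars false
set_option linter.unusedVariables false

namespace KFree

open MvPolynomial

section PartC2

variable {k : Type*} [Field k] [CharZero k] {I : Type*} [Fintype I] {L : Type*} [LieRing L]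
  [LieAlgebra k L] (b : Module.Basis I k L)

local notation "U" => UniversalEnvelopingAlgebra k L

/-- generators of the enveloping algebra -/
noncomputable def gen (i : I) : U := UniversalEnvelopingAlgebra.ι k (b i)

/-- the symmetrization map for the enveloping algebra -/
noncomputable abbrev sym : MvPolynomial I k →ₗ[k] U := tau (gen b)

attribute [local instance] LieRing.ofAssociativeRing in
lemma iota_eq (x : L) : UniversalEnvelopingAlgebra.ι k x = ∑ l, b.repr x l • gen b l := by
  conv_lhs => rw [← b.sum_repr x]
  have : ∀ y : L, UniversalEnvelopingAlgebra.ι k y =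
    (UniversalEnvelopingAlgebra.ι k : L →ₗ⁅k⁆ U).toLinearMap y := fun _ => rfl
  rw [this, map_sum]
  refine Finset.sum_congr rfl fun i _ => ?_
  rw [map_smul]; rfl

attribute [local instance] LieRing.ofAssociativeRing in
lemma iota_lie (x y : L) : (UniversalEnvelopingAlgebra.ι k ⁅x, y⁆ : U) =
    UniversalEnvelopingAlgebra.ι k x * UniversalEnvelopingAlgebra.ι k y -
    UniversalEnvelopingAlgebra.ι k y * UniversalEnvelopingAlgebra.ι k x := by
  rw [LieHom.map_lie, LieRing.of_associative_ring_bracket]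

lemma goodComm {w : I → ℕ} (hw : ∀ i j l, w l < w i + w j) : GoodComm k (gen b) w := by
  refine ⟨fun i => by have := hw i i i; omega, fun i j => ?_⟩
  have : gen b i * gen b j - gen b j * gen b i = UniversalEnvelopingAlgebra.ι k ⁅b i, b j⁆ :=
    (iota_lie _ _).symm
  rw [this, iota_eq b]
  exact sum_mem fun l _ => Submodule.smul_mem _ _ (u_mem_FW _ _ (hw i j l))

attribute [local instance] LieRing.ofAssociativeRing in
lemma env_induction (S : Subalgebra k U) (h : ∀ x : L, UniversalEnvelopingAlgebra.ι k x ∈ S) (a : U) :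
    a ∈ S := by
  let f : L →ₗ⁅k⁆ S :=
    { toFun := fun x => ⟨UniversalEnvelopingAlgebra.ι k x, h x⟩
      map_add' := fun x y => Subtype.ext (by simp)
      map_smul' := fun c x => Subtype.ext (by simp)
      map_lie' := fun {x y} => Subtype.ext (by
        simp only [LieRing.of_associative_ring_bracket]
        exact iota_lie x y) }
  have : S.val.comp (UniversalEnvelopingAlgebra.lift k f) = AlgHom.id k U := by
    apply UniversalEnvelopingAlgebra.hom_ext
    ext x
    simp [f]
  have h2 := DFunLike.congr_fun this a
  rw [AlgHom.id_apply] at h2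
  rw [← h2]
  exact Subtype.property _

lemma exists_FW (w : I → ℕ) (a : U) : ∃ m, a ∈ FW k (gen b) w m := by
  let S : Subalgebra k U :=
    { carrier := {a | ∃ m, a ∈ FW k (gen b) w m}
      mul_mem' := by
        rintro a c ⟨m, hm⟩ ⟨n, hn⟩
        exact ⟨m + n, FW_mul _ _ (by omega) hm hn⟩
      add_mem' := by
        rintro a c ⟨m, hm⟩ ⟨n, hn⟩
        exact ⟨m + n, add_mem (FW_mono _ _ (by omega) hm) (FW_mono _ _ (by omega) hn)⟩
      algebraMap_mem' := fun c => ⟨1, by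
        rw [Algebra.algebraMap_eq_smul_one]
        exact Submodule.smul_mem _ _ (one_mem_FW _ _ (by omega))⟩ }
  refine env_induction S (fun x => ?_) a
  rw [iota_eq b]
  refine sum_mem fun l _ => Subalgebra.smul_mem S ?_ _
  exact ⟨w l + 1, u_mem_FW _ _ (by omega)⟩

/-- the adjoint derivation on the symmetric algebra -/
noncomputable def adD (x : L) : Derivation k (MvPolynomial I k) (MvPolynomial I k) :=
  mkDerivation k fun j => lin (b.repr ⁅x, b j⁆)

lemma adD_X (x : L) (j : I) : adD b x (X j) = lin (b.repr ⁅x, b j⁆) := by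
  simp [adD]

lemma derivation_sum_apply (f : I → Derivation k (MvPolynomial I k) (MvPolynomial I k))
    (p : MvPolynomial I k) : (∑ j, f j) p = ∑ j, f j p := by
  have h := map_sum (Derivation.coeFnAddMonoidHom (R := k) (A := MvPolynomial I k)
    (M := MvPolynomial I k)) f Finset.univ
  have h2 := congrFun h p
  rw [Finset.sum_apply] at h2
  exact h2

lemma derivation_eq_sum (D : Derivation k (MvPolynomial I k) (MvPolynomial I k))
    (p : MvPolynomial I k) : D p = ∑ j, D (X j) * pderiv j p := by
  classical
  have : D = ∑ j, D (X j) • (pderiv j : Derivation k (MvPolynomial I k) (MvPolynomial I k)) := by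
    apply derivation_ext
    intro i
    rw [derivation_sum_apply]
    simp [pderiv_X, Pi.single_apply]
  conv_lhs => rw [this]
  rw [derivation_sum_apply]
  simp

lemma adD_homog (x : L) {n : ℕ} {p : MvPolynomial I k} (hp : p.IsHomogeneous n) :
    (adD b x p).IsHomogeneous n := by
  rw [derivation_eq_sum]
  refine IsHomogeneous.sum _ _ _ fun j _ => ?_
  rw [adD_X]
  rcases n with _ | n
  · have : p = C (coeff 0 p) := by
      rwa [← totalDegree_zero_iff_isHomogeneous, totalDegree_eq_zero_iff_eq_C] at hp
    rw [this, pderiv_C, mul_zero]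
    exact isHomogeneous_zero _ _ _
  · have := (lin_homog (b.repr ⁅x, b j⁆)).mul (hp.pderiv (i := j))
    simpa [add_comm] using this

lemma pderiv_lin (v : I → k) (i : I) : pderiv i (lin v) = C (v i) := by
  classical
  rw [lin_apply, map_sum]
  simp [pderiv_X, Pi.single_apply]

lemma pderiv_adD (x : L) (i : I) (p : MvPolynomial I k) :
    pderiv i (adD b x p) = adD b x (pderiv i p) + ∑ j, C (b.repr ⁅x, b j⁆ i) * pderiv j p := by
  classical
  have : ⁅(pderiv i : Derivation k (MvPolynomial I k) (MvPolynomial I k)), adD b x⁆ =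
      ∑ j, (C (b.repr ⁅x, b j⁆ i) : MvPolynomial I k) • (pderiv j : Derivation k (MvPolynomial I k) (MvPolynomial I k)) := by
    apply derivation_ext
    intro l
    rw [Derivation.commutator_apply, adD_X, pderiv_lin, derivation_sum_apply]
    have : adD b x (pderiv i (X l)) = 0 := by
      rw [pderiv_X, Pi.single_apply]
      split_ifs <;> simp
    rw [this]
    simp [pderiv_X, Pi.single_apply]
  have h := DFunLike.congr_fun this p
  rw [Derivation.commutator_apply, derivation_sum_apply] at h
  rw [sub_eq_iff_eq_add'.mp h]
  simp

lemma sym_equivariant_homog (x : L) (n : ℕ) : ∀ {p : MvPolynomial I k}, p.IsHomogeneous n →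
    UniversalEnvelopingAlgebra.ι k x * sym b p - sym b p * UniversalEnvelopingAlgebra.ι k x =
      sym b (adD b x p) := by
  induction n with
  | zero =>
    intro p hp
    have : p = C (coeff 0 p) := by
      rwa [← totalDegree_zero_iff_isHomogeneous, totalDegree_eq_zero_iff_eq_C] at hp
    rw [this, derivation_C, map_zero, sym, tau_C, Algebra.commutes, sub_self]
  | succ n ih =>
    intro p hp
    have hn : (n + 1 : k) ≠ 0 := by exact_mod_cast Nat.succ_ne_zero n
    refine smul_right_injective _ hn ?_
    have h1 := tau_rec (gen b) hp
    simp only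
    rw [smul_sub, ← mul_smul_comm, ← smul_mul_assoc, sym, h1, tau_rec (gen b) (adD_homog b x hp)]
    have e1 : ∀ i, gen b i * tau (gen b) (pderiv i (adD b x p)) =
      gen b i * tau (gen b) (adD b x (pderiv i p)) +
        ∑ j, (b.repr ⁅x, b j⁆ i • gen b i) * tau (gen b) (pderiv j p) := by
      intro i
      rw [pderiv_adD, map_add, mul_add, map_sum, Finset.mul_sum]
      congr 1
      refine Finset.sum_congr rfl fun j _ => ?_
      rw [← smul_eq_C_mul, map_smul, mul_smul_comm, smul_mul_assoc]
    rw [Finset.sum_congr rfl fun i _ => e1 i, Finset.sum_add_distrib, Finset.sum_comm,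
      Finset.mul_sum, Finset.sum_mul, ← Finset.sum_sub_distrib, ← Finset.sum_add_distrib]
    refine Finset.sum_congr rfl fun i _ => ?_
    rw [← Finset.sum_mul, ← iota_eq, iota_lie, ← ih (by simpa using hp.pderiv (i := i))]
    show _ = gen b i * _ + (_ * gen b i - gen b i * _) * _
    noncomm_ring

lemma sym_equivariant (x : L) (p : MvPolynomial I k) :
    UniversalEnvelopingAlgebra.ι k x * sym b p - sym b p * UniversalEnvelopingAlgebra.ι k x =
      sym b (adD b x p) := by
  induction p using MvPolynomial.induction_on' with
  | monomial s c => exact sym_equivariant_homog b x _ (isHomogeneous_monomial c rfl)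
  | add p q hp hq =>
    rw [map_add, mul_add, add_mul, add_sub_add_comm, hp, hq, map_add, map_add]

end PartC2

end KFree


set_option linter.unusedSectionVars false
set_option linter.unusedVariables false

namespace KFree

open MvPolynomial

section PartC3

variable {k : Type*} [Field k] [CharZero k] {I : Type*} [Fintype I] [DecidableEq I]
  {A : Type*} [Ring A] [Algebra k A] {u : I → A}
  {O : Type*} [CommRing O] [Algebra k O] (ρ : A →ₐ[k] Module.End k O) (δ : I → Derivation k O O)
  (hρ : ∀ i y, ρ (u i) y = δ i y) (m : Ideal O) (φ : I → O)
  (hφ : ∀ i, φ i ∈ m) (hδ : ∀ i j, δ i (φ j) - (if i = j then 1 else 0) ∈ m)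

lemma deriv_mem_pow (D : Derivation k O O) (n : ℕ) : ∀ y ∈ m ^ (n+1), D y ∈ m ^ n := by
  induction n with
  | zero => intro y _; simp
  | succ n ih =>
    intro y hy
    rw [pow_succ' m (n+1)] at hy
    refine Submodule.mul_induction_on hy (fun a ha c hc => ?_) (fun a c ha hc => ?_)
    · rw [Derivation.leibniz, smul_eq_mul, smul_eq_mul]
      refine add_mem ?_ (Ideal.mul_mem_right _ _ hc)
      rw [pow_succ' m n]
      exact Ideal.mul_mem_mul ha (ih c hc)
    · rw [map_add]; exact add_mem ha hc

include hρ in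
lemma tau_act_mem (n : ℕ) : ∀ (r : ℕ) (p : MvPolynomial I k), p.IsHomogeneous n →
    ∀ y ∈ m ^ (n + r), ρ (tau u p) y ∈ m ^ r := by
  induction n with
  | zero =>
    intro r p hp y hy
    have : p = C (coeff 0 p) := by
      rwa [← totalDegree_zero_iff_isHomogeneous, totalDegree_eq_zero_iff_eq_C] at hp
    rw [this, tau_C, AlgHom.commutes, Module.algebraMap_end_apply]
    rw [Algebra.smul_def]
    exact Ideal.mul_mem_left _ _ (by simpa using hy)
  | succ n ih =>
    intro r p hp y hy
    have hn : (n + 1 : k) ≠ 0 := by exact_mod_cast Nat.succ_ne_zero n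
    have h1 : (n + 1 : k) • ρ (tau u p) y ∈ m ^ r := by
      rw [← LinearMap.smul_apply, ← map_smul, tau_rec u hp, map_sum, LinearMap.sum_apply]
      refine sum_mem fun i _ => ?_
      rw [map_mul, Module.End.mul_apply, hρ]
      refine deriv_mem_pow m _ r _ (ih (r+1) _ (by simpa using hp.pderiv (i := i)) y ?_)
      convert hy using 2; omega
    have h2 : (n + 1 : k)⁻¹ • ((n + 1 : k) • ρ (tau u p) y) ∈ m ^ r := by
      rw [Algebra.smul_def]
      exact Ideal.mul_mem_left _ _ h1
    rwa [smul_smul, inv_mul_cancel₀ hn, one_smul] at h2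

include hφ in
lemma aeval_mem_pow {n : ℕ} {q : MvPolynomial I k} (hq : q.IsHomogeneous n) :
    aeval φ q ∈ m ^ n := by
  refine homog_induction (P := fun q => aeval φ q ∈ m ^ n) (by simp)
      (fun p q hp hq => by rw [map_add]; exact add_mem hp hq) (fun s c hs => ?_) hq
  rw [aeval_monomial]
  refine Ideal.mul_mem_left _ _ ?_
  subst hs
  clear hq
  induction s using Finsupp.induction_linear with
  | zero => simp
  | single i j => simpa using Ideal.pow_mem_pow (hφ i) j
  | add s t hs ht =>
    rw [map_add, pow_add, Finsupp.prod_add_index' (by simp) (fun _ _ _ => pow_add _ _ _)]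
    exact Ideal.mul_mem_mul hs ht

lemma chain_rule (D : Derivation k O O) (q : MvPolynomial I k) :
    D (aeval φ q) = ∑ l, aeval φ (pderiv l q) * D (φ l) := by
  induction q using MvPolynomial.induction_on with
  | C a => simp
  | add p q hp hq => simp [hp, hq, add_mul, Finset.sum_add_distrib]
  | mul_X p i hp =>
    rw [map_mul, aeval_X, Derivation.leibniz, hp, smul_eq_mul, smul_eq_mul, Finset.mul_sum]
    have : ∀ l, aeval φ (pderiv l (p * X i)) * D (φ l) =
        φ i * (aeval φ (pderiv l p) * D (φ l)) +
          (if l = i then aeval φ p * D (φ i) else 0) := by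
      intro l
      rw [pderiv_mul, pderiv_X, Pi.single_apply, map_add, map_mul, map_mul, aeval_X]
      by_cases h : l = i
      · subst h; simp; ring
      · simp [h, Ne.symm h]; ring
    rw [Finset.sum_congr rfl fun l _ => this l, Finset.sum_add_distrib]
    simp [add_comm]

include hφ hδ in
lemma deriv_aeval (i : I) {n : ℕ} {q : MvPolynomial I k} (hq : q.IsHomogeneous n) :
    δ i (aeval φ q) - aeval φ (pderiv i q) ∈ m ^ n := by
  rcases n with _ | n
  · simp
  have : δ i (aeval φ q) - aeval φ (pderiv i q) =
      ∑ l, aeval φ (pderiv l q) * (δ i (φ l) - (if i = l then 1 else 0)) := by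
    rw [chain_rule]
    simp [mul_sub, Finset.sum_sub_distrib]
  rw [this]
  refine sum_mem fun l _ => ?_
  rw [pow_succ]
  exact Ideal.mul_mem_mul (aeval_mem_pow m φ hφ (by simpa using hq.pderiv (i := l))) (hδ i l)

include hρ hφ hδ in
lemma tau_pairing (hm : ∀ c : k, algebraMap k O c ∈ m → c = 0) (n : ℕ) :
    ∀ a : I →₀ ℕ, a.degree = n → ∃ c : ℚ, 0 < c ∧ ∀ p : MvPolynomial I k, p.IsHomogeneous n →
      ρ (tau u p) (aeval φ (monomial a (1:k))) - algebraMap k O (c * coeff a p) ∈ m := by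
  induction n with
  | zero =>
    intro a ha
    rw [Finsupp.degree_eq_zero_iff] at ha
    subst ha
    refine ⟨1, one_pos, fun p hp => ?_⟩
    have : p = C (coeff 0 p) := by
      rwa [← totalDegree_zero_iff_isHomogeneous, totalDegree_eq_zero_iff_eq_C] at hp
    rw [this, tau_C, AlgHom.commutes, Module.algebraMap_end_apply]
    simp [Algebra.smul_def]
  | succ n ih =>
    intro a ha
    have hn : (n + 1 : k) ≠ 0 := by exact_mod_cast Nat.succ_ne_zero n
    have : ∀ i, ∃ c : ℚ, 0 < c ∧ (a i ≠ 0 → ∀ p : MvPolynomial I k, p.IsHomogeneous n →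
      ρ (tau u p) (aeval φ (monomial (a - Finsupp.single i 1) (1:k))) -
        algebraMap k O (c * coeff (a - Finsupp.single i 1) p) ∈ m) := by
      intro i
      by_cases h : a i = 0
      · exact ⟨1, one_pos, fun h' => absurd h h'⟩
      · obtain ⟨c, hc, hc2⟩ := ih (a - Finsupp.single i 1) (by
          have := degree_sub_single h; omega)
        exact ⟨c, hc, fun _ => hc2⟩
    choose c hc hc2 using this
    refine ⟨(∑ i, (a i : ℚ) ^ 2 * c i) / (n + 1), ?_, fun p hp => ?_⟩
    · refine div_pos ?_ (by positivity)
      obtain ⟨i, hi⟩ : ∃ i, a i ≠ 0 := by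
        by_contra! h
        have : a = 0 := by ext i; simp [h i]
        simp [this] at ha
      refine Finset.sum_pos' (fun j _ => by have := hc j; positivity) ⟨i, Finset.mem_univ _, ?_⟩
      have := hc i; positivity
    · have key : (n + 1 : k) • (ρ (tau u p) (aeval φ (monomial a (1:k)))) -
          ∑ i, algebraMap k O ((a i : k) ^ 2 * c i * coeff a p) ∈ m := by
        rw [← LinearMap.smul_apply, ← map_smul, tau_rec_right u hp, map_sum, LinearMap.sum_apply,
          ← Finset.sum_sub_distrib]
        refine sum_mem fun i _ => ?_
        rw [map_mul, Module.End.mul_apply, hρ]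
        have hpi : (pderiv i p).IsHomogeneous n := by simpa using hp.pderiv (i := i)
        have h1 := deriv_aeval δ m φ hφ hδ i (isHomogeneous_monomial (1:k) ha)
        have h2 := tau_act_mem ρ δ hρ m n 1 _ hpi _ h1
        rw [map_sub, pow_one, pderiv_monomial] at h2
        rw [← sub_add_sub_cancel]
        refine add_mem h2 ?_
        by_cases h : a i = 0
        · simp [h]
        · have h3 := hc2 i h _ hpi
          have h4 := Ideal.mul_mem_left m (algebraMap k O (a i)) h3
          convert h4 using 1
          rw [monomial_eq_smul, map_smul, map_smul, coeff_pderiv,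
            tsub_add_cancel_of_le (by rwa [Finsupp.single_le_iff, Nat.one_le_iff_ne_zero]), mul_sub,
            ← map_mul, Algebra.smul_def, one_mul]
          congr 2
          have h5 : (((a - Finsupp.single i 1 : I →₀ ℕ) i : ℕ) : k) + 1 = a i := by
            rw [Finsupp.tsub_apply, Finsupp.single_eq_same, ← Nat.cast_succ]
            congr 1; omega
          rw [h5]; ring
      have h2 := Ideal.mul_mem_left m (algebraMap k O (n + 1 : k)⁻¹) key
      convert h2 using 1
      rw [mul_sub, ← Algebra.smul_def, smul_smul, inv_mul_cancel₀ hn, one_smul, ← map_sum, ← map_mul]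
      congr 2
      push_cast
      rw [← Finset.sum_mul]
      field_simp

include hρ hφ hδ in
lemma tau_injective (hm : ∀ c : k, algebraMap k O c ∈ m → c = 0) {p : MvPolynomial I k}
    (hp : tau u p = 0) : p = 0 := by
  by_contra hne
  obtain ⟨a, ha, had⟩ : ∃ a ∈ p.support, a.degree = p.totalDegree := by
    obtain ⟨a, ha, h⟩ := Finset.exists_mem_eq_sup p.support
      (by rwa [Finset.nonempty_iff_ne_empty, Ne, support_eq_empty]) (fun s => s.sum fun _ e => e)
    exact ⟨a, ha, h.symm⟩
  set N := p.totalDegree with hN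
  have h1 : p = (∑ n ∈ Finset.range N, homogeneousComponent n p) + homogeneousComponent N p := by
    rw [← Finset.sum_range_succ, sum_homogeneousComponent]
  obtain ⟨c, hc, hc2⟩ := tau_pairing ρ δ hρ m φ hφ hδ hm N a had
  have h2 := hc2 _ (homogeneousComponent_isHomogeneous N p)
  have h3 : ρ (tau u (∑ n ∈ Finset.range N, homogeneousComponent n p))
      (aeval φ (monomial a (1:k))) ∈ m := by
    rw [map_sum, map_sum, LinearMap.sum_apply]
    refine sum_mem fun n hn => ?_
    have hn' := Finset.mem_range.mp hn
    have := tau_act_mem ρ δ hρ m n (N - n) _ (homogeneousComponent_isHomogeneous n p)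
      (aeval φ (monomial a (1:k))) (by
        convert aeval_mem_pow m φ hφ (isHomogeneous_monomial (1:k) had) using 2; omega)
    exact Ideal.pow_le_self (by omega) this
  have h4 := add_mem h3 h2
  rw [add_sub, ← LinearMap.add_apply, ← map_add, ← map_add, ← h1, hp, map_zero,
    LinearMap.zero_apply, zero_sub, neg_mem_iff] at h4
  have h5 := hm _ h4
  rw [coeff_homogeneousComponent, if_pos had] at h5
  rcases mul_eq_zero.mp h5 with h | h
  · have : c = 0 := by exact_mod_cast h
    exact hc.ne' this
  · exact mem_support_iff.mp ha h

end PartC3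

section PartC4

variable {k : Type*} [Field k] [CharZero k] {I : Type*} [Fintype I] {L : Type*} [LieRing L]
  [LieAlgebra k L] (b : Module.Basis I k L)

local notation "U" => UniversalEnvelopingAlgebra k L
local notation "O" => MvPolynomial (I × I) k

/-- derivation of the functions on matrices -/
noncomputable def matD (x : L) : Derivation k O O :=
  mkDerivation k fun ij => ∑ l, C (b.repr ⁅x, b ij.2⁆ l) * X (ij.1, l)

lemma matD_X (x : L) (i j : I) :
    matD b x (X (i, j)) = ∑ l, C (b.repr ⁅x, b j⁆ l) * X (i, l) := by
  simp [matD]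

lemma repr_lie (x y : L) (m : I) :
    b.repr ⁅x, y⁆ m = ∑ l, b.repr y l * b.repr ⁅x, b l⁆ m := by
  conv_lhs => rw [← b.sum_repr y]
  rw [lie_sum, map_sum, Finsupp.finsetSum_apply]
  simp

lemma der_C_mul {σ : Type*} (D : Derivation k (MvPolynomial σ k) (MvPolynomial σ k)) (a : k)
    (p : MvPolynomial σ k) : D (C a * p) = C a * D p := by
  rw [Derivation.leibniz, derivation_C]; simp

lemma matD_lie (x y : L) : ⁅matD b x, matD b y⁆ = matD b ⁅x, y⁆ := by
  apply derivation_ext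
  rintro ⟨i, j⟩
  have h : ∀ x y : L, matD b x (matD b y (X (i, j))) =
      ∑ m, C (b.repr ⁅x, ⁅y, b j⁆⁆ m) * X (i, m) := by
    intro x y
    rw [matD_X, map_sum]
    simp only [repr_lie b x ⁅y, b j⁆, der_C_mul, matD_X, map_sum, Finset.sum_mul, C_mul,
      Finset.mul_sum]
    rw [Finset.sum_comm]
    refine Finset.sum_congr rfl fun m _ => Finset.sum_congr rfl fun l _ => by ring
  rw [Derivation.commutator_apply, h, h, matD_X, ← Finset.sum_sub_distrib]
  refine Finset.sum_congr rfl fun m _ => ?_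
  rw [← sub_mul, ← C_sub, lie_lie, map_sub b.repr, Finsupp.sub_apply]

attribute [local instance] LieRing.ofAssociativeRing in
lemma exists_matRep : ∃ ρ : U →ₐ[k] Module.End k O,
    ∀ x y, ρ (UniversalEnvelopingAlgebra.ι k x) y = matD b x y := by
  have hadd : ∀ x y, matD b (x + y) = matD b x + matD b y := by
    intro x y
    apply derivation_ext
    rintro ⟨i, j⟩
    rw [Derivation.add_apply]
    simp [matD_X, add_mul, Finset.sum_add_distrib]
  have hsmul : ∀ (c : k) x, matD b (c • x) = c • matD b x := by
    intro c x
    apply derivation_ext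
    rintro ⟨i, j⟩
    rw [Derivation.smul_apply]
    simp [matD_X, Finset.smul_sum, smul_eq_C_mul, mul_assoc]
  let f : L →ₗ⁅k⁆ Module.End k O :=
    { toFun := fun x => (matD b x).toLinearMap
      map_add' := fun x y => by rw [hadd]; rfl
      map_smul' := fun c x => by rw [hsmul]; rfl
      map_lie' := fun {x y} => by
        rw [← matD_lie]
        ext1
        rfl }
  refine ⟨UniversalEnvelopingAlgebra.lift k f, fun x y => ?_⟩
  rw [UniversalEnvelopingAlgebra.lift_ι_apply]
  rfl

lemma exists_dual (hL : ∀ x : L, (∀ y : L, ⁅x, y⁆ = 0) → x = 0) :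
    ∃ c : I → I × I → k, ∀ (x : L) (l : I),
      ∑ ij, c l ij * b.repr ⁅x, b ij.2⁆ ij.1 = b.repr x l := by
  classical
  let F : L →ₗ[k] (I × I → k) :=
    { toFun := fun x ij => b.repr ⁅x, b ij.2⁆ ij.1
      map_add' := fun x y => by ext ij; simp
      map_smul' := fun c x => by ext ij; simp }
  have hF : LinearMap.ker F = ⊥ := by
    rw [LinearMap.ker_eq_bot']
    intro x hx
    apply hL
    have h1 : ∀ j, ⁅x, b j⁆ = 0 := by
      intro j
      apply b.repr.injective
      ext i
      have := congrFun hx (i, j)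
      simpa [F] using this
    intro y
    rw [← b.sum_repr y, lie_sum]
    simp [h1]
  obtain ⟨G, hG⟩ := LinearMap.exists_leftInverse_of_injective F hF
  refine ⟨fun l ij => b.repr (G (Pi.single ij 1)) l, fun x l => ?_⟩
  have h2 : G (F x) = x := DFunLike.congr_fun hG x
  have h3 : F x = ∑ ij, F x ij • (Pi.single ij 1 : I × I → k) := by
    ext ij
    simp [Finset.sum_apply, Pi.single_apply]
  conv_rhs => rw [← h2, h3]
  rw [map_sum, map_sum, Finsupp.finsetSum_apply]
  refine Finset.sum_congr rfl fun ij _ => ?_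
  rw [map_smul, map_smul, Finsupp.smul_apply, smul_eq_mul, mul_comm]
  rfl

theorem sym_injective (hL : ∀ x : L, (∀ y : L, ⁅x, y⁆ = 0) → x = 0) :
    Function.Injective (sym b) := by
  classical
  obtain ⟨ρ, hρ⟩ := exists_matRep b
  obtain ⟨c, hc⟩ := exists_dual b hL
  rw [injective_iff_map_eq_zero]
  intro p hp
  let ε : O →ₐ[k] k := aeval fun ij => if ij.1 = ij.2 then 1 else 0
  let φ : I → O := fun l => ∑ ij, C (c l ij) * (X (ij.1, ij.2) - C (if ij.1 = ij.2 then 1 else 0))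
  refine tau_injective ρ (fun i => matD b (b i)) (fun i y => hρ _ _) (RingHom.ker ε) φ ?_ ?_ ?_ hp
  · intro l
    rw [RingHom.mem_ker]
    simp only [φ, map_sum, map_mul, map_sub, ε, aeval_X, algHom_C]
    refine Finset.sum_eq_zero fun ij _ => ?_
    by_cases h : ij.1 = ij.2
    · simp [h]
    · simp [h]
  · intro i l
    rw [RingHom.mem_ker]
    have e1 : ∀ j j' : I, ε (matD b (b i) (X (j', j))) = b.repr ⁅b i, b j⁆ j' := by
      intro j j'
      rw [matD_X]
      simp [ε]
    have e2 : ε (matD b (b i) (φ l)) = b.repr (b i) l := by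
      rw [← hc]
      simp only [φ, map_sum]
      refine Finset.sum_congr rfl fun ij _ => ?_
      rw [der_C_mul, map_sub, derivation_C, sub_zero, map_mul, e1]
      simp [ε]
    rw [map_sub, e2]
    simp [Finsupp.single_apply, apply_ite ε]
  · intro a ha
    rw [RingHom.mem_ker] at ha
    simpa using ha

end PartC4

end KFree


set_option linter.unusedSectionVars false
set_option linter.unusedVariables false

namespace KFree

open MvPolynomial

section PartB1

variable {k : Type*} [Field k] {Φ ι : Type*} [Fintype Φ] [Fintype ι]
  [DecidableEq Φ] [DecidableEq ι]

/-- coefficients with respect to the first set of variables -/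
noncomputable def coef (u : Φ →₀ ℕ) : MvPolynomial (Φ ⊕ ι) k →ₗ[k] MvPolynomial ι k :=
  ((lcoeff (MvPolynomial ι k) u).restrictScalars k).comp (sumAlgEquiv k Φ ι).toLinearMap

lemma coef_apply (u : Φ →₀ ℕ) (p : MvPolynomial (Φ ⊕ ι) k) :
    coef u p = coeff u (sumAlgEquiv k Φ ι p) := rfl

/-- the embedding of the second variables -/
noncomputable abbrev emb : MvPolynomial ι k →ₐ[k] MvPolynomial (Φ ⊕ ι) k := rename Sum.inr

lemma sum_emb (q : MvPolynomial ι k) : sumAlgEquiv k Φ ι (emb q) = C q := by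
  have := DFunLike.congr_fun (sumAlgEquiv_comp_rename_inr (R := k) (S₁ := Φ) (S₂ := ι)) q
  simpa using this

lemma coef_emb_mul (u : Φ →₀ ℕ) (q : MvPolynomial ι k) (p : MvPolynomial (Φ ⊕ ι) k) :
    coef u (emb q * p) = q * coef u p := by
  rw [coef_apply, map_mul, sum_emb, coeff_C_mul, coef_apply]

lemma coef_C_mul (u : Φ →₀ ℕ) (a : k) (p : MvPolynomial (Φ ⊕ ι) k) :
    coef u (C a * p) = C a * coef u p := by
  rw [← coef_emb_mul]; simp

lemma coef_X_mul (u : Φ →₀ ℕ) (α : Φ) (p : MvPolynomial (Φ ⊕ ι) k) :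
    coef u (X (Sum.inl α) * p) = if u α ≠ 0 then coef (u - Finsupp.single α 1) p else 0 := by
  rw [coef_apply, map_mul, sumAlgEquiv_X_inl, coeff_X_mul']
  simp only [Finsupp.mem_support_iff, coef_apply]

lemma coef_pderiv_inl (u : Φ →₀ ℕ) (α : Φ) (p : MvPolynomial (Φ ⊕ ι) k) :
    coef u (pderiv (Sum.inl α) p) = C ((u α : k) + 1) * coef (u + Finsupp.single α 1) p := by
  rw [coef_apply, ← pderiv_sumAlgEquiv, coeff_pderiv, coef_apply]
  simp [mul_comm]

lemma coef_monomial (u : Φ →₀ ℕ) (w : Φ →₀ ℕ) (s : ι →₀ ℕ) :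
    coef u (monomial (w.sumElim s) (1:k)) = if w = u then monomial s (1:k) else 0 := by
  rw [coef_apply]
  have : (monomial (w.sumElim s) (1:k) : MvPolynomial (Φ ⊕ ι) k) =
      (sumAlgEquiv k Φ ι).symm (monomial w (monomial s (1:k))) := by
    rw [AlgEquiv.eq_symm_apply]
    rw [Finsupp.sumElim_eq_add, ← mul_one (1:k), ← monomial_mul, ← rename_monomial, map_mul,
      ← rename_monomial, sum_emb]
    have h := DFunLike.congr_fun (sumAlgEquiv_comp_rename_inl (R := k) (S₁ := Φ) (S₂ := ι))
      (monomial w (1:k))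
    have h2 : (sumAlgEquiv k Φ ι) (rename Sum.inl (monomial w (1:k))) = _ := h
    rw [h2]
    simp [mul_comm, C_mul_monomial]
  rw [this, AlgEquiv.apply_symm_apply, coeff_monomial]

lemma coeff_coef (u : Φ →₀ ℕ) (s : ι →₀ ℕ) (p : MvPolynomial (Φ ⊕ ι) k) :
    coeff s (coef u p) = coeff (u.sumElim s) p := by
  induction p using MvPolynomial.induction_on' with
  | add p q hp hq => rw [map_add, coeff_add, coeff_add, hp, hq]
  | monomial t a =>
    rw [monomial_eq_smul, map_smul, coeff_smul, coeff_smul]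
    congr 1
    rw [← Finsupp.comapDomain_sumElim_comapDomain t, coef_monomial, coeff_monomial]
    set t1 := Finsupp.comapDomain Sum.inl t Sum.inl_injective.injOn
    set t2 := Finsupp.comapDomain Sum.inr t Sum.inr_injective.injOn
    by_cases h1 : t1 = u
    · subst h1
      rw [if_pos rfl, coeff_monomial]
      by_cases h2 : t2 = s
      · subst h2; simp
      · rw [if_neg h2, if_neg]
        intro h3; apply h2
        have := congrArg (fun f => Finsupp.comapDomain Sum.inr f Sum.inr_injective.injOn) h3
        simpa only [Finsupp.comapDomain_inr_sumElim] using this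
    · rw [if_neg h1, if_neg]
      · simp
      · intro h3; apply h1
        have := congrArg (fun f => Finsupp.comapDomain Sum.inl f Sum.inl_injective.injOn) h3
        simpa only [Finsupp.comapDomain_inl_sumElim] using this

lemma coef_pderiv_inr (u : Φ →₀ ℕ) (i : ι) (p : MvPolynomial (Φ ⊕ ι) k) :
    coef u (pderiv (Sum.inr i) p) = pderiv i (coef u p) := by
  ext s
  rw [coeff_coef, coeff_pderiv, coeff_pderiv, coeff_coef]
  have : u.sumElim s + Finsupp.single (Sum.inr i) 1 = u.sumElim (s + Finsupp.single i 1) := by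
    rw [← Finsupp.sumElim_zero_single, ← Finsupp.sumElim_add, add_zero]
  rw [this]; simp [Finsupp.sumElim_inr]

lemma coef_ext {p q : MvPolynomial (Φ ⊕ ι) k} (h : ∀ u, coef u p = coef u q) : p = q := by
  apply (sumAlgEquiv k Φ ι).injective
  ext1 u
  exact h u

lemma degree_sumElim (u : Φ →₀ ℕ) (s : ι →₀ ℕ) : (u.sumElim s).degree = u.degree + s.degree := by
  simp only [Finsupp.degree_eq_sum, Fintype.sum_sum_type, Finsupp.sumElim_inl, Finsupp.sumElim_inr]

/-- embedding of first variable monomials -/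
noncomputable def xi (w : Φ →₀ ℕ) : MvPolynomial (Φ ⊕ ι) k := monomial (w.sumElim 0) (1:k)

lemma coef_emb_xi (u w : Φ →₀ ℕ) (q : MvPolynomial ι k) :
    coef u (emb q * xi w) = if w = u then q else 0 := by
  rw [coef_emb_mul, xi, coef_monomial]
  split_ifs <;> simp

end PartB1

end KFree


set_option linter.unusedSectionVars false
set_option linter.unusedVariables false
set_option linter.unusedSimpArgs false

namespace KFree

open MvPolynomial

section PartB2a

variable {k : Type*} [Field k] [CharZero k] {I : Type*} [Fintype I] {L : Type*} [LieRing L]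
  [LieAlgebra k L] (b : Module.Basis I k L)

/-- linear polynomials attached to elements -/
noncomputable def lr : L →ₗ[k] MvPolynomial I k where
  toFun x := lin (b.repr x)
  map_add' x y := by rw [map_add, Finsupp.coe_add, map_add]
  map_smul' a x := by rw [map_smul, Finsupp.coe_smul, map_smul]; rfl

lemma lr_apply (x : L) : lr b x = lin (b.repr x) := rfl

lemma lr_basis (i : I) : lr b (b i) = X i := by
  classical
  rw [lr_apply, lin_apply, Finset.sum_eq_single i]
  · simp
  · intro j _ hj
    simp [Finsupp.single_apply, hj.symm]
  · simp

lemma adD_X' (x : L) (j : I) : adD b x (X j) = lr b ⁅x, b j⁆ := adD_X b x j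

lemma adD_lr (x y : L) : adD b x (lr b y) = lr b ⁅x, y⁆ := by
  conv_lhs => rw [← b.sum_repr y]
  conv_rhs => rw [← b.sum_repr y]
  rw [map_sum, map_sum, lie_sum, map_sum]
  refine Finset.sum_congr rfl fun i _ => ?_
  rw [lie_smul, map_smul (lr b), map_smul (lr b), lr_basis, Derivation.map_smul, adD_X']

lemma adD_comm (x y : L) (p : MvPolynomial I k) :
    adD b x (adD b y p) - adD b y (adD b x p) = adD b ⁅x, y⁆ p := by
  have h : ⁅adD b x, adD b y⁆ = adD b ⁅x, y⁆ := by
    apply MvPolynomial.derivation_ext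
    intro i
    rw [Derivation.commutator_apply, adD_X', adD_X', adD_X', adD_lr, adD_lr, lie_lie, map_sub]
  rw [← h, Derivation.commutator_apply]

lemma adD_lin (p : MvPolynomial I k) (x : L) : adD b x p = ∑ i, b.repr x i • adD b (b i) p := by
  rw [derivation_eq_sum]
  have : ∀ i, b.repr x i • adD b (b i) p = ∑ j, b.repr x i • (adD b (b i) (X j) * pderiv j p) := by
    intro i; rw [derivation_eq_sum (adD b (b i)), Finset.smul_sum]
  simp_rw [this]
  rw [Finset.sum_comm]
  refine Finset.sum_congr rfl fun j _ => ?_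
  simp_rw [← smul_mul_assoc]
  rw [← Finset.sum_mul]
  congr 1
  rw [adD_X']
  conv_lhs => rw [← b.sum_repr x]
  rw [sum_lie, map_sum]
  refine Finset.sum_congr rfl fun i _ => ?_
  rw [smul_lie, map_smul, adD_X']

end PartB2a

section PartB2

variable {k : Type*} [Field k] [CharZero k] {Φ ι : Type*} [Fintype Φ] [Fintype ι]
  [DecidableEq Φ] [DecidableEq ι] {L : Type*} [LieRing L] [LieAlgebra k L]

/-- Root space data in a Lie algebra, in terms of a basis. -/
structure Rts (b : Module.Basis (Φ ⊕ ι) k L) (rt ct : Φ → ι → k) (neg : Φ → Φ) (c : Φ → k) :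
    Prop where
  neg_neg : ∀ α, neg (neg α) = α
  neg_ne : ∀ α, neg α ≠ α
  rt_neg : ∀ α, rt (neg α) = - rt α
  h_h : ∀ i j, ⁅b (.inr i), b (.inr j)⁆ = 0
  h_e : ∀ i α, ⁅b (.inr i), b (.inl α)⁆ = rt α i • b (.inl α)
  c_ne : ∀ α, c α ≠ 0
  e_neg : ∀ α, ⁅b (.inl (neg α)), b (.inl α)⁆ = c α • ∑ i, ct α i • b (.inr i)
  e_e : ∀ α β, β ≠ neg α → ∀ x, b.repr ⁅b (.inl α), b (.inl β)⁆ x ≠ 0 →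
    ∃ γ, x = .inl γ ∧ rt γ = rt α + rt β
  two : ∀ α, dotp (rt α) (ct α) = 2
  nonprop : ∀ α β, β ≠ α → β ≠ neg α → ∀ a : k, ct β ≠ a • ct α
  not_two : ∀ α β, rt β ≠ (2 : k) • rt α

variable {b : Module.Basis (Φ ⊕ ι) k L} {rt ct : Φ → ι → k} {neg : Φ → Φ} {c : Φ → k}
  (H : Rts b rt ct neg c)

include H

lemma Rts.rt_ne (α : Φ) : rt α ≠ 0 := by
  intro h
  have := H.two α
  rw [h] at this
  simp [dotp] at this

lemma Rts.ct_ne (α : Φ) : ct α ≠ 0 := by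
  intro h
  have := H.two α
  rw [h] at this
  simp [dotp] at this

lemma Rts.adD_self (α : Φ) :
    adD b (b (.inl (neg α))) (X (.inl α)) = emb (C (c α) * lin (ct α)) := by
  rw [adD_X', H.e_neg, map_smul, map_sum, map_mul, lin_apply, map_sum, smul_eq_C_mul]
  simp [lr_basis, smul_eq_C_mul]

lemma Rts.adD_inr (α : Φ) (i : ι) :
    adD b (b (.inl (neg α))) (X (.inr i)) = C (rt α i) * X (.inl (neg α)) := by
  rw [adD_X', ← lie_skew, H.h_e, H.rt_neg, map_neg, map_smul, lr_basis, smul_eq_C_mul]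
  simp

omit H in
/-- directional derivative -/
noncomputable def dd (f : ι → k) : Derivation k (MvPolynomial ι k) (MvPolynomial ι k) :=
  mkDerivation k (fun i => C (f i))

lemma Rts.repr_inr_zero {α β : Φ} (h : β ≠ α) (i : ι) :
    b.repr ⁅b (.inl (neg α)), b (.inl β)⁆ (.inr i) = 0 := by
  by_contra h1
  obtain ⟨γ, h2, _⟩ := H.e_e (neg α) β (by rwa [H.neg_neg]) _ h1
  simp at h2

lemma Rts.repr_inl {α β γ : Φ} (h : β ≠ α)
    (h1 : b.repr ⁅b (.inl (neg α)), b (.inl β)⁆ (.inl γ) ≠ 0) : rt γ = rt β - rt α := by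
  obtain ⟨γ', h2, h3⟩ := H.e_e (neg α) β (by rwa [H.neg_neg]) _ h1
  simp only [Sum.inl.injEq] at h2
  subst h2
  rw [h3, H.rt_neg]; abel

omit H in
lemma dd_eq (f : ι → k) (q : MvPolynomial ι k) : dd f q = ∑ i, C (f i) * pderiv i q := by
  rw [derivation_eq_sum]
  refine Finset.sum_congr rfl fun i _ => ?_
  rw [dd, mkDerivation_X]

lemma Rts.coef_formula (α : Φ) (v : Φ →₀ ℕ) (p : MvPolynomial (Φ ⊕ ι) k) :
    coef v (adD b (b (.inl (neg α))) p) =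
      C (c α * ((v α : k) + 1)) * lin (ct α) * coef (v + Finsupp.single α 1) p +
      (∑ β ∈ Finset.univ.erase α, ∑ γ, C (b.repr ⁅b (.inl (neg α)), b (.inl β)⁆ (.inl γ)) *
        coef v (X (.inl γ) * pderiv (.inl β) p)) +
      (if v (neg α) ≠ 0 then dd (rt α) (coef (v - Finsupp.single (neg α) 1) p) else 0) := by
  rw [derivation_eq_sum, Fintype.sum_sum_type, map_add, map_sum, map_sum]
  rw [← Finset.add_sum_erase _ _ (Finset.mem_univ α)]
  congr 1
  · congr 1
    · rw [H.adD_self, coef_emb_mul, coef_pderiv_inl, C_mul]; ring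
    · refine Finset.sum_congr rfl fun β hβ => ?_
      rw [adD_X, lin_apply, Fintype.sum_sum_type, add_mul]
      have : ∑ i, C (b.repr ⁅b (.inl (neg α)), b (.inl β)⁆ (.inr i)) *
          (X (.inr i) : MvPolynomial (Φ ⊕ ι) k) = 0 := by
        refine Finset.sum_eq_zero fun i _ => ?_
        rw [H.repr_inr_zero (Finset.ne_of_mem_erase hβ)]; simp
      rw [this, zero_mul, add_zero, Finset.sum_mul, map_sum]
      refine Finset.sum_congr rfl fun γ _ => ?_
      rw [mul_assoc, coef_C_mul]
  · simp_rw [H.adD_inr, mul_assoc, coef_C_mul, coef_X_mul, coef_pderiv_inr]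
    split_ifs with h
    · rw [dd_eq]
    · simp

lemma Rts.L1 (α : Φ) (v : Φ →₀ ℕ) (p : MvPolynomial (Φ ⊕ ι) k)
    (h : ∀ w : Φ →₀ ℕ, w.degree ≤ v.degree → coef w p = 0) :
    coef v (adD b (b (.inl (neg α))) p) =
      C (c α * ((v α : k) + 1)) * lin (ct α) * coef (v + Finsupp.single α 1) p := by
  rw [H.coef_formula, Finset.sum_eq_zero, add_zero]
  · split_ifs with h1
    · rw [h (v - _), map_zero, add_zero]
      have := degree_sub_single h1
      omega
    · rw [add_zero]
  · intro β _
    refine Finset.sum_eq_zero fun γ _ => ?_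
    rw [coef_X_mul]
    split_ifs with h1
    · rw [coef_pderiv_inl, h, mul_zero, mul_zero]
      have := degree_sub_single h1
      rw [map_add, Finsupp.degree_single]
      omega
    · rw [mul_zero]

/-- the exponent `a α + a (-α)` -/
noncomputable def ex (neg : Φ → Φ) (α : Φ) (a : ℕ) : Φ →₀ ℕ :=
  Finsupp.single α a + Finsupp.single (neg α) a

omit H in
lemma ex_zero (α : Φ) : ex neg α 0 = 0 := by simp [ex]

lemma Rts.L2 (α : Φ) (a : ℕ) (p : MvPolynomial (Φ ⊕ ι) k) :
    coef (ex neg α a + Finsupp.single (neg α) 1) (adD b (b (.inl (neg α))) p) =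
      C (c α * ((a : k) + 1)) * lin (ct α) * coef (ex neg α (a + 1)) p +
      dd (rt α) (coef (ex neg α a) p) := by
  have hne := H.neg_ne α
  rw [H.coef_formula, Finset.sum_eq_zero, add_zero]
  · have h1 : (ex neg α a + Finsupp.single (neg α) 1 : Φ →₀ ℕ) α = a := by
      simp [ex, Finsupp.single_apply, hne]
    have h2 : (ex neg α a + Finsupp.single (neg α) 1 : Φ →₀ ℕ) (neg α) ≠ 0 := by
      simp
    rw [h1, if_pos h2, add_tsub_cancel_right]
    congr 3
    simp only [ex, Finsupp.single_add]
    abel_nf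
  · intro β hβ
    refine Finset.sum_eq_zero fun γ _ => ?_
    by_cases h0 : b.repr ⁅b (.inl (neg α)), b (.inl β)⁆ (.inl γ) = 0
    · rw [h0]; simp
    have h1 := H.repr_inl (Finset.ne_of_mem_erase hβ) h0
    rw [coef_X_mul, if_neg, mul_zero]
    rw [not_not]
    have h2 : α ≠ γ := by
      rintro rfl
      apply H.not_two α β
      rw [two_smul]; nth_rewrite 1 [h1]; abel
    have h3 : neg α ≠ γ := by
      rintro rfl
      apply H.rt_ne β
      rw [H.rt_neg] at h1
      have : rt β = -rt α + rt α := by rw [h1]; abel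
      rw [this]; simp
    simp [ex, Finsupp.single_apply, h2, h3]

lemma Rts.L3 (i : ι) (v : Φ →₀ ℕ) (p : MvPolynomial (Φ ⊕ ι) k) :
    coef v (adD b (b (.inr i)) p) = C (∑ β, (v β : k) * rt β i) * coef v p := by
  rw [derivation_eq_sum, Fintype.sum_sum_type, map_add, map_sum, map_sum, map_sum, Finset.sum_mul]
  have : ∑ j, coef v (adD b (b (.inr i)) (X (.inr j)) * pderiv (.inr j) p) = 0 := by
    refine Finset.sum_eq_zero fun j _ => ?_
    rw [adD_X', H.h_h, map_zero, zero_mul, map_zero]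
  rw [this, add_zero]
  refine Finset.sum_congr rfl fun β _ => ?_
  rw [adD_X', H.h_e, map_smul, lr_basis, smul_eq_C_mul, mul_assoc, coef_C_mul, coef_X_mul]
  split_ifs with h1
  · rw [coef_pderiv_inl]
    have h2 : v - Finsupp.single β 1 + Finsupp.single β 1 = v := by
      ext γ
      by_cases h : γ = β
      · subst h; simp; omega
      · simp [Finsupp.single_apply, Ne.symm h]
    rw [h2, ← mul_assoc, ← C_mul]
    congr 2
    have : ((v - Finsupp.single β 1 : Φ →₀ ℕ) β : k) + 1 = v β := by
      rw [← Nat.cast_add_one]; congr 1; simp; omega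
    rw [this, mul_comm]
  · simp only [ne_eq, not_not] at h1
    simp [h1]

end PartB2

end KFree


set_option linter.unusedSectionVars false
set_option linter.unusedVariables false
set_option linter.unusedSimpArgs false

namespace KFree

open MvPolynomial

section PartB3a

variable {k : Type*} [Field k] [CharZero k] {ι : Type*} [Fintype ι] [DecidableEq ι]

lemma dd_X (f : ι → k) (i : ι) : dd f (X i) = C (f i) := by rw [dd, mkDerivation_X]

lemma dd_C (f : ι → k) (a : k) : dd f (C a) = 0 := (dd f).map_algebraMap a

lemma dd_C_mul (f : ι → k) (a : k) (p : MvPolynomial ι k) : dd f (C a * p) = C a * dd f p :=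
  der_C_mul _ a p

lemma dd_lin (f v : ι → k) : dd f (lin v) = C (dotp f v) := by
  rw [lin_apply, map_sum, dotp, map_sum]
  refine Finset.sum_congr rfl fun i _ => ?_
  rw [dd_C_mul, dd_X, ← C_mul, mul_comm]

lemma shear_dd {f v : ι → k} (h2 : dotp f v = 2) (q : MvPolynomial ι k) :
    shear f v (dd f q) = - dd f (shear f v q) := by
  induction q using MvPolynomial.induction_on with
  | C a =>
    have : shear f v (C a) = C a := (shear f v).commutes a
    rw [this, dd_C, map_zero, neg_zero]
  | add p q hp hq => rw [map_add, map_add, map_add, map_add, hp, hq]; ring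
  | mul_X p i hp =>
    have hC : ∀ a : k, shear f v (C a) = C a := (shear f v).commutes
    rw [Derivation.leibniz, map_mul, Derivation.leibniz, smul_eq_mul, smul_eq_mul, smul_eq_mul,
      smul_eq_mul, map_add, map_mul, map_mul, hp, dd_X, hC, shear_X, map_sub, dd_C_mul, dd_lin,
      h2, dd_X]
    have : (C (2:k) : MvPolynomial ι k) = 2 := map_ofNat C 2
    rw [this]; ring

lemma dd_pow_mul (f v : ι → k) (n : ℕ) (g : MvPolynomial ι k) :
    dd f (lin v ^ (n + 1) * g) =
      lin v ^ n * (C ((n + 1 : k) * dotp f v) * g + lin v * dd f g) := by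
  rw [Derivation.leibniz, Derivation.leibniz_pow, dd_lin, smul_eq_mul, smul_eq_mul, smul_eq_mul,
    nsmul_eq_mul]
  rw [C_mul]
  have : (C (n + 1 : k) : MvPolynomial ι k) = ((n+1 : ℕ) : MvPolynomial ι k) := by simp
  rw [this]
  simp only [Nat.add_sub_cancel]
  ring

lemma half {p q : MvPolynomial ι k} {a : k} (ha : a ≠ 0) (h : C a * p = q) : p = C a⁻¹ * q := by
  rw [← h, ← mul_assoc, ← C_mul, inv_mul_cancel₀ ha, C_1, one_mul]

lemma anti_dvd {f v : ι → k} {r : MvPolynomial ι k} (h : shear f v r = - r) : lin v ∣ r := by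
  obtain ⟨T, hT, _⟩ := demazure_exists f v
  have h1 := hT r
  rw [h] at h1
  have h3 : C (2:k) * r = lin v * T r := by
    have : (C (2:k) : MvPolynomial ι k) = 2 := map_ofNat C 2
    rw [h1, this]; ring
  have := half two_ne_zero h3
  exact ⟨C (2:k)⁻¹ * T r, by nth_rewrite 1 [this]; ring⟩

lemma anti_const {f v : ι → k} (h2 : dotp f v = 2) {r : MvPolynomial ι k}
    (h : shear f v r = - r) (hd : dd f r = 0) : r = 0 := by
  have hv : v ≠ 0 := by
    rintro rfl; simp [dotp] at h2
  have hl : (lin v : MvPolynomial ι k) ≠ 0 := lin_ne_zero hv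
  have key : ∀ n : ℕ, lin v ^ (n + 1) ∣ r := by
    intro n
    induction n with
    | zero => rw [zero_add, pow_one]; exact anti_dvd h
    | succ n ih =>
      obtain ⟨g, hg⟩ := ih
      rw [hg, dd_pow_mul, h2] at hd
      have h3 := (mul_eq_zero.mp hd).resolve_left (pow_ne_zero _ hl)
      have h4 : C ((n + 1 : k) * 2) * g = - (lin v * dd f g) := by
        rw [eq_neg_iff_add_eq_zero]; exact h3
      have h5 := half (by
        have : (n + 1 : k) ≠ 0 := by exact_mod_cast Nat.succ_ne_zero n
        exact mul_ne_zero this two_ne_zero) h4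
      refine ⟨- (C ((n + 1 : k) * 2)⁻¹ * dd f g), ?_⟩
      rw [hg]
      nth_rewrite 1 [h5]
      ring
  by_contra hr
  obtain ⟨g, hg⟩ := key r.totalDegree
  have hg0 : g ≠ 0 := by rintro rfl; simp at hg; exact hr hg
  have h6 : (lin v ^ (r.totalDegree + 1) : MvPolynomial ι k).totalDegree = r.totalDegree + 1 := by
    have := ((lin_homog v).pow (r.totalDegree + 1)).totalDegree (pow_ne_zero _ hl)
    rw [this]; ring
  have h7 := congrArg totalDegree hg
  rw [totalDegree_mul_of_isDomain (pow_ne_zero _ hl) hg0, h6] at h7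
  omega

end PartB3a

section PartB3

variable {k : Type*} [Field k] [CharZero k] {Φ ι : Type*} [Fintype Φ] [Fintype ι]
  [DecidableEq Φ] [DecidableEq ι] {L : Type*} [LieRing L] [LieAlgebra k L]

/-- invariants of the adjoint action -/
def Inv {I : Type*} [Fintype I] (b : Module.Basis I k L) : Subalgebra k (MvPolynomial I k) where
  carrier := {p | ∀ x, adD b x p = 0}
  mul_mem' := by
    intro p q hp hq x
    rw [Derivation.leibniz, hp x, hq x]; simp
  add_mem' := by
    intro p q hp hq x
    rw [map_add, hp x, hq x, add_zero]
  algebraMap_mem' := by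
    intro a x
    exact Derivation.map_algebraMap _ a

lemma mem_Inv {I : Type*} [Fintype I] (b : Module.Basis I k L) {p : MvPolynomial I k} :
    p ∈ Inv b ↔ ∀ x, adD b x p = 0 := Iff.rfl

variable {b : Module.Basis (Φ ⊕ ι) k L} {rt ct : Φ → ι → k} {neg : Φ → Φ} {c : Φ → k}
  (H : Rts b rt ct neg c)

lemma coef_eq_zero_of_lt {p : MvPolynomial (Φ ⊕ ι) k} {u : Φ →₀ ℕ} (h : p.totalDegree < u.degree) :
    coef u p = 0 := by
  ext s
  rw [coeff_coef, coeff_zero]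
  apply coeff_eq_zero_of_totalDegree_lt
  refine h.trans_le ?_
  have := degree_sumElim u s
  rw [Finsupp.degree_apply] at this
  omega

lemma degree_ex (α : Φ) (a : ℕ) : (ex neg α a).degree = a + a := by
  rw [ex, map_add, Finsupp.degree_single, Finsupp.degree_single]

include H

lemma Rts.step_inv {α : Φ} {q q' : MvPolynomial ι k} {a : k}
    (h : C a * lin (ct α) * q' + dd (rt α) q = 0) (hq' : shear (rt α) (ct α) q' = q') :
    shear (rt α) (ct α) q = q := by
  have hC : ∀ a : k, shear (rt α) (ct α) (C a) = C a := (shear (rt α) (ct α)).commutes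
  have h1 := congrArg (shear (rt α) (ct α)) h
  rw [map_add, map_mul, map_mul, hC, hq', shear_lin_self (H.two α), shear_dd (H.two α),
    map_zero] at h1
  have h2 : q - shear (rt α) (ct α) q = 0 := by
    apply anti_const (H.two α)
    · rw [map_sub, shear_refl (H.two α)]; ring
    · rw [map_sub]; linear_combination h + h1
  exact (sub_eq_zero.mp h2).symm

lemma Rts.res_inv {p : MvPolynomial (Φ ⊕ ι) k} (hp : p ∈ Inv b) : coef 0 p ∈ invs rt ct := by
  rw [mem_invs]
  intro α
  have key : ∀ n j : ℕ, n + j = p.totalDegree + 1 →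
      shear (rt α) (ct α) (coef (ex neg α j) p) = coef (ex neg α j) p := by
    intro n
    induction n with
    | zero =>
      intro j hj
      rw [coef_eq_zero_of_lt, map_zero]
      rw [degree_ex]; omega
    | succ n ih =>
      intro j hj
      refine H.step_inv (q' := coef (ex neg α (j + 1)) p) (a := c α * (j + 1)) ?_
        (ih (j + 1) (by omega))
      rw [← H.L2, hp, map_zero]
  rw [← ex_zero (neg := neg) α]
  exact key _ 0 rfl

omit H in
lemma exists_ne_of_degree {n : ℕ} {u : Φ →₀ ℕ} (h : u.degree = n + 1) :
    ∃ α, u α ≠ 0 ∧ ∃ v : Φ →₀ ℕ, v.degree = n ∧ u = v + Finsupp.single α 1 ∧ u α = v α + 1 := by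
  have : ∃ α, u α ≠ 0 := by
    by_contra! h1
    have : u = 0 := by ext a; simp [h1 a]
    rw [this] at h; simp at h
  obtain ⟨α, hα⟩ := this
  refine ⟨α, hα, u - Finsupp.single α 1, ?_, ?_, ?_⟩
  · have := degree_sub_single hα; omega
  · ext γ
    by_cases h : γ = α
    · subst h; simp; omega
    · simp [Ne.symm h]
  · simp; omega

lemma Rts.inj {p : MvPolynomial (Φ ⊕ ι) k} (hp : p ∈ Inv b) (h0 : coef 0 p = 0) : p = 0 := by
  have key : ∀ n : ℕ, ∀ u : Φ →₀ ℕ, u.degree ≤ n → coef u p = 0 := by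
    intro n
    induction n with
    | zero =>
      intro u hu
      have : u = 0 := by
        rw [← Finsupp.degree_eq_zero_iff]; omega
      rw [this, h0]
    | succ n ih =>
      intro u hu
      rcases Nat.lt_or_ge n u.degree with h | h
      · obtain ⟨α, hα, v, hv, rfl, -⟩ := exists_ne_of_degree (n := n) (u := u) (by omega)
        have h1 := H.L1 α v p (fun w hw => ih w (by omega))
        rw [hp, map_zero] at h1
        have h2 : (C (c α * ((v α : k) + 1)) * lin (ct α) : MvPolynomial ι k) ≠ 0 := by
          refine mul_ne_zero ?_ (lin_ne_zero (H.ct_ne α))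
          rw [Ne, C_eq_zero]
          have : (v α + 1 : k) ≠ 0 := by exact_mod_cast Nat.succ_ne_zero (v α)
          exact mul_ne_zero (H.c_ne α) this
        exact (mul_eq_zero.mp h1.symm).resolve_left h2
      · exact ih u h
  apply coef_ext
  intro u
  rw [key _ u le_rfl, map_zero]

end PartB3

end KFree


set_option linter.unusedSectionVars false
set_option linter.unusedVariables false
set_option linter.unusedSimpArgs false

namespace KFree

open MvPolynomial

section PartB4

variable {k : Type*} [Field k] [CharZero k] {Φ ι : Type*} [Fintype Φ] [Fintype ι]
  [DecidableEq Φ] [DecidableEq ι] {L : Type*} [LieRing L] [LieAlgebra k L]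

lemma adD_totalDegree {I : Type*} [Fintype I] (b : Module.Basis I k L) (x : L)
    {p : MvPolynomial I k} {d : ℕ} (h : p.totalDegree ≤ d) : (adD b x p).totalDegree ≤ d := by
  rw [← sum_homogeneousComponent p, map_sum]
  refine (totalDegree_finsetSum _ _).trans (Finset.sup_le fun i hi => ?_)
  have := (adD_homog b x (homogeneousComponent_isHomogeneous i p)).totalDegree_le
  rw [Finset.mem_range] at hi
  omega

lemma totalDegree_coef {p : MvPolynomial (Φ ⊕ ι) k} {d : ℕ} (h : p.totalDegree ≤ d) {u : Φ →₀ ℕ}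
    (hu : coef u p ≠ 0) : u.degree + (coef u p).totalDegree ≤ d := by
  have h1 : u.degree ≤ d := by
    by_contra h2
    exact hu (coef_eq_zero_of_lt (by omega))
  have : (coef u p).totalDegree ≤ d - u.degree := by
    rw [totalDegree]
    refine Finset.sup_le fun s hs => ?_
    rw [mem_support_iff, coeff_coef] at hs
    have := le_totalDegree (mem_support_iff.mpr hs)
    have h3 := degree_sumElim u s
    rw [Finsupp.degree_apply, Finsupp.degree_apply s] at h3
    simp only [Finsupp.sum] at this ⊢
    omega
  omega

lemma totalDegree_of_coef {p : MvPolynomial (Φ ⊕ ι) k} {d : ℕ}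
    (h : ∀ u : Φ →₀ ℕ, coef u p ≠ 0 → u.degree + (coef u p).totalDegree ≤ d) :
    p.totalDegree ≤ d := by
  rw [totalDegree]
  refine Finset.sup_le fun s hs => ?_
  rw [← Finsupp.comapDomain_sumElim_comapDomain s] at hs ⊢
  set t1 := Finsupp.comapDomain Sum.inl s Sum.inl_injective.injOn
  set t2 := Finsupp.comapDomain Sum.inr s Sum.inr_injective.injOn
  rw [mem_support_iff, ← coeff_coef] at hs
  have h1 := h t1 (by intro h0; rw [h0] at hs; simp at hs)
  have h2 := le_totalDegree (mem_support_iff.mpr hs)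
  have h3 := degree_sumElim t1 t2
  rw [Finsupp.degree_apply, Finsupp.degree_apply t2] at h3
  simp only [Finsupp.sum] at h2 ⊢
  omega

variable {b : Module.Basis (Φ ⊕ ι) k L} {rt ct : Φ → ι → k} {neg : Φ → Φ} {c : Φ → k}

/-- approximate lifts of invariants -/
structure Good (b : Module.Basis (Φ ⊕ ι) k L) (neg : Φ → Φ) (d M : ℕ) (f : MvPolynomial ι k)
    (P : MvPolynomial (Φ ⊕ ι) k) : Prop where
  res : coef 0 P = f
  deg : P.totalDegree ≤ d
  wt : ∀ i, adD b (b (.inr i)) P = 0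
  van : ∀ α (v : Φ →₀ ℕ), v.degree < M → coef v (adD b (b (.inl (neg α))) P) = 0

/-- abbreviation for the lowering derivations -/
noncomputable abbrev dn (b : Module.Basis (Φ ⊕ ι) k L) (neg : Φ → Φ) (α : Φ) :=
  adD b (b (.inl (neg α)))

lemma cons_ne {a : k} (ha : a ≠ 0) (n : ℕ) : a * ((n : k) + 1) ≠ 0 := by
  have : (n + 1 : k) ≠ 0 := by exact_mod_cast Nat.succ_ne_zero n
  exact mul_ne_zero ha this

variable (H : Rts b rt ct neg c)

include H

lemma Rts.closed {d M : ℕ} {f : MvPolynomial ι k} {P : MvPolynomial (Φ ⊕ ι) k}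
    (hP : Good b neg d M f P) (α β : Φ) (u : Φ →₀ ℕ) (hu : u.degree < M) :
    C (c α * ((u α : k) + 1)) * lin (ct α) * coef (u + Finsupp.single α 1) (dn b neg β P) =
    C (c β * ((u β : k) + 1)) * lin (ct β) * coef (u + Finsupp.single β 1) (dn b neg α P) := by
  rw [← H.L1 α u (dn b neg β P) (fun w hw => hP.van β w (by omega)),
    ← H.L1 β u (dn b neg α P) (fun w hw => hP.van α w (by omega)), ← sub_eq_zero, ← map_sub,
    adD_comm, adD_lin, map_sum]
  refine Finset.sum_eq_zero fun x _ => ?_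
  rw [map_smul]
  rcases x with γ | i
  · rw [← H.neg_neg γ, hP.van _ u hu, smul_zero]
  · rw [hP.wt, map_zero, smul_zero]

lemma Rts.weight_low {d M : ℕ} {f : MvPolynomial ι k} {P : MvPolynomial (Φ ⊕ ι) k}
    (hP : Good b neg d M f P) (α : Φ) (v : Φ →₀ ℕ) (i : ι) :
    C ((∑ β, (v β : k) * rt β i) + rt α i) * coef v (dn b neg α P) = 0 := by
  have h1 := adD_comm b (b (.inr i)) (b (.inl (neg α))) P
  rw [hP.wt, map_zero, sub_zero, H.h_e, H.rt_neg] at h1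
  have h2 : adD b ((-rt α) i • b (.inl (neg α))) P = C (- rt α i) * dn b neg α P := by
    rw [adD_lin, Finset.sum_eq_single (Sum.inl (neg α))]
    · simp [smul_eq_C_mul]
    · intro x _ hx
      simp [hx]
    · simp
  rw [h2] at h1
  have h3 := congrArg (coef v) h1
  rw [H.L3, coef_C_mul, C_neg] at h3
  rw [C_add, add_mul, h3]; ring

lemma Rts.dvd_of_dvd_mul {α β : Φ} (h1 : β ≠ α) (h2 : β ≠ neg α) {q g : MvPolynomial ι k}
    (h : lin (ct β) * q = lin (ct α) * g) : lin (ct α) ∣ q := by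
  have h3 : dotp ((2:k)⁻¹ • rt α) (ct α) = 1 := by
    have : dotp ((2:k)⁻¹ • rt α) (ct α) = (2:k)⁻¹ * dotp (rt α) (ct α) := by
      simp [dotp, Finset.mul_sum, mul_assoc]
    rw [this, H.two]; norm_num
  set s := shear ((2:k)⁻¹ • rt α) (ct α) with hs
  have h4 : s (lin (ct α)) = 0 := by
    rw [hs, shear_lin, h3]; simp
  have h5 : s (lin (ct β)) ≠ 0 := by
    rw [hs, shear_lin, ← smul_eq_C_mul, ← map_smul, ← map_sub]
    apply lin_ne_zero
    rw [Ne, sub_eq_zero]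
    exact H.nonprop α β h1 h2 _
  have h6 := congrArg s h
  rw [map_mul, map_mul, h4, zero_mul] at h6
  have h7 := (mul_eq_zero.mp h6).resolve_left h5
  obtain ⟨T, hT, _⟩ := demazure_exists ((2:k)⁻¹ • rt α) (ct α)
  refine ⟨T q, ?_⟩
  rw [hT, ← hs, h7, sub_zero]

lemma Rts.inv_up {d M : ℕ} {f : MvPolynomial ι k} (hf : f ∈ invs rt ct)
    {P : MvPolynomial (Φ ⊕ ι) k}
    (hP : Good b neg d M f P) (α : Φ) (a : ℕ) (ha : a + a ≤ M) :
    shear (rt α) (ct α) (coef (ex neg α a) P) = coef (ex neg α a) P := by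
  induction a with
  | zero => rw [ex_zero, hP.res]; exact (mem_invs rt ct).mp hf α
  | succ a ih =>
    have ih := ih (by omega)
    have hC : ∀ a : k, shear (rt α) (ct α) (C a) = C a := (shear (rt α) (ct α)).commutes
    have h1 := H.L2 α a P
    rw [hP.van] at h1
    · have h2 := congrArg (shear (rt α) (ct α)) h1
      rw [map_zero, map_add, map_mul, map_mul, hC, shear_lin_self (H.two α), shear_dd (H.two α),
        ih] at h2
      have h3 : C (c α * ((a : k) + 1)) * lin (ct α) ≠ (0 : MvPolynomial ι k) := by
        refine mul_ne_zero ?_ (lin_ne_zero (H.ct_ne α))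
        rw [Ne, C_eq_zero]
        exact cons_ne (H.c_ne α) a
      apply mul_left_cancel₀ h3
      linear_combination h1 + h2
    · rw [map_add, degree_ex, Finsupp.degree_single]; omega

lemma Rts.dvd {d M : ℕ} {f : MvPolynomial ι k} (hf : f ∈ invs rt ct)
    {P : MvPolynomial (Φ ⊕ ι) k}
    (hP : Good b neg d M f P) (α : Φ) (v : Φ →₀ ℕ) (hv : v.degree = M) :
    lin (ct α) ∣ coef v (dn b neg α P) := by
  by_cases h1 : ∃ β, β ≠ α ∧ β ≠ neg α ∧ v β ≠ 0
  · obtain ⟨β, hβ1, hβ2, hβ⟩ := h1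
    have h2 : v - Finsupp.single β 1 + Finsupp.single β 1 = v := by
      ext γ
      by_cases h : γ = β
      · subst h; simp; omega
      · simp [Ne.symm h]
    have h3 := degree_sub_single hβ
    have h4 := H.closed hP α β (v - Finsupp.single β 1) (by omega)
    rw [h2] at h4
    set A := coef (v - Finsupp.single β 1 + Finsupp.single α 1) (dn b neg β P)
    set B := coef v (dn b neg α P)
    set x := ((v - Finsupp.single β 1 : Φ →₀ ℕ) α)
    set y := ((v - Finsupp.single β 1 : Φ →₀ ℕ) β)
    have h5 : C (c β * ((y : k) + 1)) * (lin (ct β) * B) =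
      lin (ct α) * (C (c α * ((x : k) + 1)) * A) := by linear_combination -h4
    have h6 := half (cons_ne (H.c_ne β) y) h5
    refine H.dvd_of_dvd_mul hβ1 hβ2
      (g := C (c β * ((y : k) + 1))⁻¹ * (C (c α * ((x : k) + 1)) * A)) ?_
    rw [h6]; ring
  · push Not at h1
    by_cases h0 : coef v (dn b neg α P) = 0
    · rw [h0]; exact dvd_zero _
    have h2 : ∀ i, (∑ β, (v β : k) * rt β i) + rt α i = 0 := by
      intro i
      have := (mul_eq_zero.mp (H.weight_low hP α v i)).resolve_right h0
      rwa [C_eq_zero] at this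
    have h3 : ∀ i, ((v α : k) - v (neg α) + 1) * rt α i = 0 := by
      intro i
      rw [← h2 i, Fintype.sum_eq_add α (neg α) (H.neg_ne α).symm, H.rt_neg]
      · simp only [Pi.neg_apply]; ring
      · intro β hβ
        rw [h1 β hβ.1 hβ.2]; simp
    have h4 : (v α : k) - v (neg α) + 1 = 0 := by
      obtain ⟨i, hi⟩ := Function.ne_iff.mp (H.rt_ne α)
      exact (mul_eq_zero.mp (h3 i)).resolve_right hi
    have h5 : v (neg α) = v α + 1 := by
      have : (v (neg α) : k) = ((v α + 1 : ℕ) : k) := by push_cast; linear_combination -h4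
      exact_mod_cast this
    have h6 : v = ex neg α (v α) + Finsupp.single (neg α) 1 := by
      ext γ
      by_cases hg1 : γ = α
      · subst hg1; simp [ex, H.neg_ne γ]
      · by_cases hg2 : γ = neg α
        · subst hg2; simp [ex, (H.neg_ne α).symm, h5]
        · rw [h1 γ hg1 hg2]; simp [ex, Ne.symm hg1, Ne.symm hg2]
    have h7 : v α + v α ≤ M := by
      rw [← hv]
      conv_rhs => rw [h6, map_add, degree_ex, Finsupp.degree_single]
      omega
    rw [h6, dn, H.L2]
    refine dvd_add ?_ ?_
    · exact Dvd.dvd.mul_right (Dvd.intro_left _ rfl) _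
    · apply anti_dvd (f := rt α)
      rw [shear_dd (H.two α), H.inv_up hf hP α (v α) h7]

lemma Rts.exists_q {d M : ℕ} {f : MvPolynomial ι k} (hf : f ∈ invs rt ct)
    {P : MvPolynomial (Φ ⊕ ι) k}
    (hP : Good b neg d M f P) (w : Φ →₀ ℕ) : ∃ q : MvPolynomial ι k, w.degree = M + 1 →
    ∀ α v, w = v + Finsupp.single α 1 →
      C (c α * ((v α : k) + 1)) * lin (ct α) * q = coef v (dn b neg α P) := by
  by_cases hw : w.degree = M + 1
  swap
  · exact ⟨0, fun h => absurd h hw⟩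
  obtain ⟨α, hα, v, hv, rfl, h1⟩ := exists_ne_of_degree hw
  obtain ⟨g, hg⟩ := H.dvd hf hP α v hv
  refine ⟨C (c α * ((v α : k) + 1))⁻¹ * g, fun _ => ?_⟩
  have hmain : C (c α * ((v α : k) + 1)) * lin (ct α) * (C (c α * ((v α : k) + 1))⁻¹ * g) =
      coef v (dn b neg α P) := by
    rw [hg]
    have : (C (c α * ((v α : k) + 1)) * C (c α * ((v α : k) + 1))⁻¹ : MvPolynomial ι k) = 1 := by
      rw [← C_mul, mul_inv_cancel₀ (cons_ne (H.c_ne α) _), C_1]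
    linear_combination (lin (ct α) * g) * this
  intro β v' h
  by_cases hβ : β = α
  · subst hβ
    rw [← add_right_cancel h, hmain]
  · have h2 : v β ≠ 0 := by
      have := DFunLike.congr_fun h β
      simp [Ne.symm hβ] at this
      omega
    have h3 := degree_sub_single h2
    have h4 : v - Finsupp.single β 1 + Finsupp.single β 1 = v := by
      ext γ
      by_cases h : γ = β
      · subst h; simp; omega
      · simp [Ne.symm h]
    set u := v - Finsupp.single β 1 with hu
    have h5 : v' = u + Finsupp.single α 1 := by
      apply add_right_cancel (b := Finsupp.single β 1)
      rw [← h, ← h4]; abel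
    have h6 := H.closed hP α β u (by omega)
    rw [h4, ← h5, ← hmain] at h6
    have h7 : u α = v α := by simp [hu, hβ]
    have h8 : u β = v' β := by simp [h5, Ne.symm hβ]
    rw [h7, h8] at h6
    have h9 : C (c α * ((v α : k) + 1)) * lin (ct α) ≠ (0 : MvPolynomial ι k) := by
      refine mul_ne_zero ?_ (lin_ne_zero (H.ct_ne α))
      rw [Ne, C_eq_zero]
      exact cons_ne (H.c_ne α) _
    apply mul_left_cancel₀ h9
    rw [h6]; ring

lemma Rts.step {d M : ℕ} {f : MvPolynomial ι k} (hf : f ∈ invs rt ct)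
    {P : MvPolynomial (Φ ⊕ ι) k}
    (hP : Good b neg d M f P) : ∃ P', Good b neg d (M + 1) f P' := by
  choose q hq using H.exists_q hf hP
  set F := (Finset.univ : Finset Φ).finsuppAntidiag (M + 1) with hF
  have hmem : ∀ w : Φ →₀ ℕ, w ∈ F ↔ w.degree = M + 1 := by
    intro w
    rw [hF, Finset.mem_finsuppAntidiag, Finsupp.degree_eq_sum]
    simp
  set Q : MvPolynomial (Φ ⊕ ι) k := ∑ w ∈ F, emb (q w) * xi w with hQ
  have hcQ : ∀ u, coef u Q = if u.degree = M + 1 then q u else 0 := by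
    intro u
    rw [hQ, map_sum]
    simp_rw [coef_emb_xi]
    rw [Finset.sum_ite_eq']
    simp only [hmem]
  have hz : ∀ u : Φ →₀ ℕ, u.degree = M + 1 → q u ≠ 0 → ∃ α v, v.degree = M ∧
      u = v + Finsupp.single α 1 ∧ coef v (dn b neg α P) ≠ 0 ∧
      (coef v (dn b neg α P)).totalDegree = 1 + (q u).totalDegree := by
    intro u hu hqu
    obtain ⟨α, hα, v, hv, h, h1⟩ := exists_ne_of_degree hu
    have hc : (C (c α * ((v α : k) + 1)) : MvPolynomial ι k) ≠ 0 := by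
      rw [Ne, C_eq_zero]
      exact cons_ne (H.c_ne α) _
    have hl := lin_ne_zero (H.ct_ne α)
    have h2 := hq u hu α v h
    refine ⟨α, v, hv, h, ?_, ?_⟩
    · rw [← h2]
      exact mul_ne_zero (mul_ne_zero hc hl) hqu
    · rw [← h2, totalDegree_mul_of_isDomain (mul_ne_zero hc hl) hqu,
        totalDegree_mul_of_isDomain hc hl, totalDegree_C, (lin_homog _).totalDegree hl]
  refine ⟨P - Q, ?_, ?_, ?_, ?_⟩
  · rw [map_sub, hP.res, hcQ, if_neg, sub_zero]
    simp
  · refine (totalDegree_sub _ _).trans (max_le hP.deg ?_)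
    apply totalDegree_of_coef
    intro u hu
    rw [hcQ] at hu ⊢
    split_ifs at hu ⊢ with h1
    · obtain ⟨α, v, hv, -, h2, h3⟩ := hz u h1 hu
      have := totalDegree_coef (adD_totalDegree b (b (.inl (neg α))) hP.deg) h2
      change (coef v ((adD b (b (.inl (neg α)))) P)).totalDegree = _ at h3
      omega
    · exact absurd rfl hu
  · intro i
    rw [map_sub, hP.wt, zero_sub, neg_eq_zero]
    apply coef_ext
    intro u
    rw [H.L3, hcQ, map_zero]
    split_ifs with h1
    · by_cases h2 : q u = 0
      · rw [h2, mul_zero]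
      obtain ⟨α, v, hv, h, h3, -⟩ := hz u h1 h2
      have h4 := (mul_eq_zero.mp (H.weight_low hP α v i)).resolve_right h3
      have h5 : ∑ β, (u β : k) * rt β i = (∑ β, (v β : k) * rt β i) + rt α i := by
        rw [h]
        simp [Finsupp.single_apply, add_mul, Finset.sum_add_distrib, ite_mul]
      rw [h5, h4, zero_mul]
    · rw [mul_zero]
  · intro α v hv
    rw [map_sub, map_sub, H.L1 α v Q, hcQ, map_add, Finsupp.degree_single]
    · split_ifs with h1
      · rw [hq _ (by rw [map_add, Finsupp.degree_single]; exact h1) α v rfl, sub_self]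
      · rw [hP.van _ _ (by omega)]; ring
    · intro w hw
      rw [hcQ, if_neg]
      omega

lemma Rts.lift {d : ℕ} {f : MvPolynomial ι k} (hf : f ∈ invs rt ct) (hd : f.totalDegree ≤ d) :
    ∃ P ∈ Inv b, coef 0 P = f ∧ P.totalDegree ≤ d := by
  have key : ∀ M, ∃ P, Good b neg d M f P := by
    intro M
    induction M with
    | zero =>
      refine ⟨emb f, ?_, ?_, ?_, ?_⟩
      · have := coef_emb_xi (0 : Φ →₀ ℕ) 0 f
        simpa [xi] using this
      · exact (totalDegree_rename_le _ _).trans hd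
      · intro i
        apply coef_ext
        intro u
        rw [H.L3, map_zero]
        have := coef_emb_xi u 0 f
        have h1 : (xi 0 : MvPolynomial (Φ ⊕ ι) k) = 1 := by simp [xi]
        rw [h1, mul_one] at this
        rw [this]
        split_ifs with h
        · subst h; simp
        · simp
      · intro α v hv; omega
    | succ M ih =>
      obtain ⟨P, hP⟩ := ih
      exact H.step hf hP
  obtain ⟨P, hP⟩ := key (d + 1)
  refine ⟨P, ?_, hP.res, hP.deg⟩
  intro x
  rw [adD_lin]
  refine Finset.sum_eq_zero fun y _ => ?_
  have : adD b (b y) P = 0 := by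
    rcases y with γ | i
    · rw [← H.neg_neg γ]
      apply coef_ext
      intro u
      rw [map_zero]
      by_cases h : u.degree < d + 1
      · exact hP.van _ u h
      · apply coef_eq_zero_of_lt
        have := adD_totalDegree b (b (.inl (neg (neg γ)))) hP.deg
        omega
    · exact hP.wt i
  rw [this, smul_zero]

end PartB4

end KFree


set_option linter.unusedSectionVars false
set_option linter.unusedVariables false
set_option linter.unusedSimpArgs false

namespace KFree

open MvPolynomial

section PartD

variable {k : Type*} [Field k] [CharZero k] {Φ ι : Type*} [Fintype Φ] [Fintype ι]
  [DecidableEq Φ] [DecidableEq ι] {L : Type*} [LieRing L] [LieAlgebra k L]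

/-- the weights -/
def W : Φ ⊕ ι → ℕ := Sum.elim (fun _ => 2) (fun _ => 3)

lemma weight_W (u : Φ →₀ ℕ) (s : ι →₀ ℕ) :
    Finsupp.weight W (u.sumElim s) = 2 * u.degree + 3 * s.degree := by
  rw [Finsupp.weight_apply, Finsupp.sum_fintype _ _ (by simp), Fintype.sum_sum_type]
  simp only [W, Sum.elim_inl, Sum.elim_inr, smul_eq_mul, Finsupp.sumElim_inl, Finsupp.sumElim_inr,
    Finsupp.degree_eq_sum, Finset.mul_sum]
  congr 1 <;> exact Finset.sum_congr rfl fun _ _ => mul_comm _ _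

lemma emb_mem_Fil {r : MvPolynomial ι k} {m : ℕ} (h : ∀ t, coeff t r ≠ 0 → 3 * t.degree < m) :
    (emb r : MvPolynomial (Φ ⊕ ι) k) ∈ Fil k W m := by
  intro s hs
  rw [← Finsupp.comapDomain_sumElim_comapDomain s] at hs ⊢
  set t1 := Finsupp.comapDomain Sum.inl s Sum.inl_injective.injOn
  set t2 := Finsupp.comapDomain Sum.inr s Sum.inr_injective.injOn
  rw [weight_W]
  rw [← coeff_coef] at hs
  have h1 := coef_emb_xi t1 0 r
  have h2 : (xi 0 : MvPolynomial (Φ ⊕ ι) k) = 1 := by simp [xi]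
  rw [h2, mul_one] at h1
  rw [h1] at hs
  split_ifs at hs with h3
  · have := h t2 hs
    rw [← h3]; simpa using this
  · simp at hs

variable {b : Module.Basis (Φ ⊕ ι) k L} {rt ct : Φ → ι → k} {neg : Φ → Φ} {c : Φ → k}

lemma goodW : GoodComm k (gen b) (W : Φ ⊕ ι → ℕ) := by
  apply goodComm
  rintro (i | i) (j | j) (l | l) <;> simp [W]

variable (H : Rts b rt ct neg c)

lemma coeff_three {r : MvPolynomial ι k} {m : ℕ} (h : ∀ t, coeff t r ≠ 0 → 3 * t.degree < m + 1) :
    3 * r.totalDegree ≤ m := by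
  have h1 : r.totalDegree ≤ m / 3 := by
    rw [totalDegree]
    refine Finset.sup_le fun s hs => ?_
    have := h s (mem_support_iff.mp hs)
    rw [Finsupp.degree_apply] at this
    simp only [Finsupp.sum]
    omega
  omega

include H

lemma Rts.Inv_deg {p : MvPolynomial (Φ ⊕ ι) k} (hp : p ∈ Inv b) :
    p.totalDegree ≤ (coef 0 p).totalDegree := by
  obtain ⟨P, hP, h1, h2⟩ := H.lift (H.res_inv hp) le_rfl
  have : p - P = 0 := by
    apply H.inj (sub_mem hp hP)
    rw [map_sub, h1, sub_self]
  rw [sub_eq_zero] at this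
  rw [← this] at h2
  exact h2

lemma Rts.sub_mem_Fil {p : MvPolynomial (Φ ⊕ ι) k} (hp : p ∈ Inv b) {m : ℕ}
    (h : ∀ t, coeff t (coef 0 p) ≠ 0 → 3 * t.degree < m + 1) :
    p - emb (coef 0 p) ∈ Fil k W m := by
  have h3 := coeff_three h
  have h4 := H.Inv_deg hp
  intro s hs
  rw [← Finsupp.comapDomain_sumElim_comapDomain s] at hs ⊢
  set t1 := Finsupp.comapDomain Sum.inl s Sum.inl_injective.injOn
  set t2 := Finsupp.comapDomain Sum.inr s Sum.inr_injective.injOn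
  rw [weight_W]
  rw [← coeff_coef, map_sub] at hs
  have h1 := coef_emb_xi t1 0 (coef 0 p)
  have h2 : (xi 0 : MvPolynomial (Φ ⊕ ι) k) = 1 := by simp [xi]
  rw [h2, mul_one] at h1
  rw [h1] at hs
  split_ifs at hs with h5
  · rw [h5, sub_self] at hs; simp at hs
  · rw [sub_zero, coeff_coef] at hs
    have h6 := le_totalDegree (mem_support_iff.mpr hs)
    have h7 := degree_sumElim t1 t2
    rw [Finsupp.degree_apply] at h7
    simp only [Finsupp.sum] at h6
    have h8 : t1.degree ≠ 0 := by
      rw [Ne, Finsupp.degree_eq_zero_iff]; exact fun h => h5 h.symm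
    omega

lemma Rts.approx {p : MvPolynomial (Φ ⊕ ι) k} (hp : p ∈ Inv b) {s : Φ ⊕ ι →₀ ℕ} {n : ℕ}
    (h : ∀ t, coeff t (coef 0 p) ≠ 0 → 3 * t.degree + Finsupp.weight W s < n + 1) :
    sym b p * sym b (monomial s (1:k)) - sym b (emb (coef 0 p) * monomial s (1:k)) ∈
      FW k (gen b) W n := by
  by_cases h0 : coef 0 p = 0
  · rw [H.inj hp h0]; simp
  obtain ⟨t, ht⟩ := MvPolynomial.ne_zero_iff.mp h0
  have h1 := h t ht
  obtain ⟨m, hm⟩ : ∃ m, n = m + Finsupp.weight W s := ⟨n - Finsupp.weight W s, by omega⟩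
  have h2 : ∀ t, coeff t (coef 0 p) ≠ 0 → 3 * t.degree < m + 1 := by
    intro t ht; have := h t ht; omega
  have h3 := H.sub_mem_Fil hp h2
  have h4 : p ∈ Fil k W (m + 1) := by
    have := add_mem (Fil_mono (Nat.le_succ m) h3) (emb_mem_Fil h2)
    simpa using this
  have h5 : monomial s (1:k) ∈ Fil k W (Finsupp.weight W s + 1) :=
    monomial_mem_Fil (by omega) 1
  have h6 := tau_mul (goodW (b := b)) h4 h5
  have h7 : (p - emb (coef 0 p)) * monomial s (1:k) ∈ Fil k W n := Fil_mul (by omega) h3 h5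
  have h8 : sym b ((p - emb (coef 0 p)) * monomial s (1:k)) ∈ FW k (gen b) W n := tau_mem_FW h7
  rw [← hm] at h6
  have := add_mem h6 h8
  rw [sub_mul, map_sub] at this
  convert this using 1
  abel

omit H in
lemma sym_surjective (b : Module.Basis (Φ ⊕ ι) k L) : Function.Surjective (sym b) := by
  intro a
  obtain ⟨m, hm⟩ := exists_FW b W a
  obtain ⟨p, -, hp⟩ := FW_le_tau goodW m a hm
  exact ⟨p, hp⟩

omit H in
lemma sym_mem_center (hs : Function.Injective (sym b)) (p : MvPolynomial (Φ ⊕ ι) k) :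
    sym b p ∈ Subalgebra.center k (UniversalEnvelopingAlgebra k L) ↔ p ∈ Inv b := by
  constructor
  · intro h x
    apply hs
    rw [← sym_equivariant, map_zero, sub_eq_zero]
    exact (Subalgebra.mem_center_iff.mp h) _
  · intro h
    rw [Subalgebra.mem_center_iff]
    intro a
    have := env_induction (Subalgebra.centralizer k {sym b p}) (fun x => ?_) a
    · rw [Subalgebra.mem_centralizer_iff] at this
      exact (this _ rfl).symm
    · rw [Subalgebra.mem_centralizer_iff]
      rintro _ rfl
      have h1 := sym_equivariant b x p
      rw [h x, map_zero, sub_eq_zero] at h1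
      exact h1.symm

lemma Rts.span_aux (hs : Function.Injective (sym b)) {E : Set (ι →₀ ℕ)}
    (hE : ∀ d, ∀ q : MvPolynomial ι k, q.IsHomogeneous d → q ∈ Submodule.span k
        {p | ∃ a, ∃ e ∈ E, ∃ r ∈ invs rt ct, r.IsHomogeneous a ∧ a + e.degree = d ∧
          p = r * monomial e 1}) (N : Submodule (Subalgebra.center k (UniversalEnvelopingAlgebra k L))
            (UniversalEnvelopingAlgebra k L))
    (hN : ∀ e ∈ E, ∀ u : Φ →₀ ℕ, sym b (monomial (u.sumElim e) (1:k)) ∈ N) (m : ℕ) :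
    ∀ p ∈ Fil k W m, sym b p ∈ N := by
  have hsm : ∀ (a : k) x, x ∈ N → a • x ∈ N := by
    intro a x hx
    have := N.smul_mem (algebraMap k _ a) hx
    rwa [algebraMap_smul] at this
  induction m with
  | zero => intro p hp; rw [Fil_zero hp, map_zero]; exact zero_mem _
  | succ m ih =>
    intro p hp
    refine Fil_induction (P := fun p => sym b p ∈ N) (by simp) ?_ ?_ hp
    · intro p q hp hq; rw [map_add]; exact add_mem hp hq
    · intro t a ht
      rw [monomial_eq_smul, map_smul]
      apply hsm
      rw [← Finsupp.comapDomain_sumElim_comapDomain t] at ht ⊢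
      set u := Finsupp.comapDomain Sum.inl t Sum.inl_injective.injOn
      set s := Finsupp.comapDomain Sum.inr t Sum.inr_injective.injOn
      rw [weight_W] at ht
      have h1 : (monomial (u.sumElim s) (1:k) : MvPolynomial (Φ ⊕ ι) k) =
          emb (monomial s (1:k)) * xi u := by
        apply coef_ext
        intro w
        rw [coef_emb_xi, coef_monomial]
      rw [h1]
      have h2 := hE s.degree (monomial s (1:k)) (isHomogeneous_monomial _ rfl)
      generalize monomial s (1:k) = mm at h2
      induction h2 using Submodule.span_induction with
      | zero => rw [map_zero, zero_mul, map_zero]; exact zero_mem _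
      | add x y _ _ hx hy => rw [map_add, add_mul, map_add]; exact add_mem hx hy
      | smul a x _ hx =>
        rw [map_smul, smul_mul_assoc, map_smul]; exact hsm _ _ hx
      | mem x hx =>
        obtain ⟨a, e, he, r, hr, hra, hae, rfl⟩ := hx
        have h3 : (emb (r * monomial e (1:k)) * xi u : MvPolynomial (Φ ⊕ ι) k) =
            emb r * monomial (u.sumElim e) (1:k) := by
          apply coef_ext
          intro w
          rw [coef_emb_xi, coef_emb_mul, coef_monomial]
          split_ifs <;> simp
        rw [h3]
        obtain ⟨P, hP, hP1, -⟩ := H.lift hr le_rfl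
        have h4 := H.approx hP (s := u.sumElim e) (n := m) (by
          intro t ht
          rw [weight_W]
          rw [hP1] at ht
          have h5 : t.degree = a := by
            have := hra ht
            rw [Finsupp.degree_eq_weight_one]; exact this
          omega)
        rw [hP1] at h4
        obtain ⟨q, hq, hq1⟩ := FW_le_tau goodW m _ h4
        have h5 := ih q hq
        have h6 := N.smul_mem ⟨sym b P, (sym_mem_center hs P).mpr hP⟩ (hN e he u)
        rw [Subalgebra.smul_def, smul_eq_mul] at h6
        have h7 := sub_mem h6 h5
        rw [show sym b q = _ from hq1] at h7
        simpa using h7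

omit H in
lemma homComp_mul_monomial (j : ℕ) (r : MvPolynomial ι k) (e : ι →₀ ℕ) :
    homogeneousComponent j (r * monomial e (1:k)) =
      (if e.degree ≤ j then homogeneousComponent (j - e.degree) r else 0) * monomial e (1:k) := by
  ext s
  rw [coeff_homogeneousComponent, coeff_mul_monomial', coeff_mul_monomial']
  by_cases h1 : e ≤ s
  · simp only [h1, if_true, mul_one]
    obtain ⟨t, rfl⟩ := exists_add_of_le h1
    rw [map_add, add_tsub_cancel_left]
    split_ifs with h2 h3 h3
    · rw [coeff_homogeneousComponent, if_pos (by omega)]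
    · omega
    · rw [coeff_homogeneousComponent, if_neg (by omega)]
    · simp
  · simp [h1]

omit H in
lemma homComp_invs {r : MvPolynomial ι k} (hr : r ∈ invs rt ct) (j : ℕ) :
    homogeneousComponent j r ∈ invs rt ct := by
  rw [mem_invs] at hr ⊢
  intro α
  have h1 := hr α
  have h2 : homogeneousComponent j (shear (rt α) (ct α) r) =
      shear (rt α) (ct α) (homogeneousComponent j r) := by
    conv_lhs => rw [← sum_homogeneousComponent r, map_sum, map_sum]
    have : ∀ i, homogeneousComponent j (shear (rt α) (ct α) (homogeneousComponent i r)) =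
        if i = j then shear (rt α) (ct α) (homogeneousComponent i r) else 0 := by
      intro i
      have h3 := shear_homog (rt α) (ct α) (homogeneousComponent_isHomogeneous i r)
      rw [homogeneousComponent_of_mem h3]
      simp [eq_comm]
    simp_rw [this]
    rw [Finset.sum_ite_eq']
    split_ifs with h4
    · rfl
    · rw [homogeneousComponent_eq_zero, map_zero]
      simp at h4; omega
  rw [← h2, h1]

omit H in
lemma indep_finset {E : Set (ι →₀ ℕ)}
    (hE : ∀ r : (ι →₀ ℕ) →₀ MvPolynomial ι k, (∀ e ∈ r.support, e ∈ E ∧ r e ∈ invs rt ct) →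
        (r.sum fun e c => c * monomial e 1) = 0 → r = 0)
    (s : Finset E) (g : E → MvPolynomial ι k) (hg : ∀ e, g e ∈ invs rt ct)
    (h : ∑ e ∈ s, g e * monomial (e : ι →₀ ℕ) (1:k) = 0) : ∀ e ∈ s, g e = 0 := by
  set r : (ι →₀ ℕ) →₀ MvPolynomial ι k :=
    (Finsupp.indicator s (fun e _ => g e)).embDomain (Function.Embedding.subtype _) with hr
  have h1 : ∀ e : E, r e = if e ∈ s then g e else 0 := by
    intro e
    have : r ((Function.Embedding.subtype _) e) = _ :=
      Finsupp.embDomain_apply_self (Function.Embedding.subtype _) (Finsupp.indicator s (fun e _ => g e)) e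
    rw [Finsupp.indicator_apply] at this
    simpa using this
  have h2 : r = 0 := by
    apply hE
    · intro e he
      rw [hr, Finsupp.support_embDomain, Finset.mem_map] at he
      obtain ⟨e', he', rfl⟩ := he
      refine ⟨e'.2, ?_⟩
      have := h1 e'
      rw [show r ((Function.Embedding.subtype _) e') = r (e' : ι →₀ ℕ) from rfl, this]
      split_ifs
      · exact hg _
      · exact zero_mem _
    · rw [hr, Finsupp.sum_embDomain, Finsupp.sum_indicator_index _ (by simp)]
      exact h
  intro e he
  have := h1 e
  rw [h2, if_pos he] at this
  exact this.symm

lemma Rts.indep_aux (hs : Function.Injective (sym b)) {E : Set (ι →₀ ℕ)}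
    (hE : ∀ r : (ι →₀ ℕ) →₀ MvPolynomial ι k, (∀ e ∈ r.support, e ∈ E ∧ r e ∈ invs rt ct) →
        (r.sum fun e c => c * monomial e 1) = 0 → r = 0)
    (s1 : Finset E) (s2 : Finset (Φ →₀ ℕ)) (p : E × (Φ →₀ ℕ) → MvPolynomial (Φ ⊕ ι) k)
    (hp : ∀ x, p x ∈ Inv b)
    (h : ∑ x ∈ s1 ×ˢ s2, sym b (p x) *
      sym b (monomial (x.2.sumElim (x.1 : ι →₀ ℕ)) (1:k)) = 0) : ∀ x ∈ s1 ×ˢ s2, p x = 0 := by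
  set wt : E × (Φ →₀ ℕ) → ℕ := fun x => Finsupp.weight W (x.2.sumElim (x.1 : ι →₀ ℕ)) with hwt
  have hdown : ∀ n : ℕ,
      (∀ x ∈ s1 ×ˢ s2, ∀ t, coeff t (coef 0 (p x)) ≠ 0 → 3 * t.degree + wt x < n) →
      ∀ x ∈ s1 ×ˢ s2, p x = 0 := by
    intro n
    induction n with
    | zero =>
      intro hn x hx
      apply H.inj (hp x)
      ext t
      by_contra ht
      exact absurd (hn x hx t (by simpa using ht)) (by omega)
    | succ n ih =>
      intro hn
      apply ih
      have h1 : sym b (∑ x ∈ s1 ×ˢ s2,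
          emb (coef 0 (p x)) * monomial (x.2.sumElim (x.1 : ι →₀ ℕ)) (1:k)) ∈
          FW k (gen b) W n := by
        have : (∑ x ∈ s1 ×ˢ s2, (sym b (p x) * sym b (monomial (x.2.sumElim (x.1 : ι →₀ ℕ)) (1:k)) -
            sym b (emb (coef 0 (p x)) * monomial (x.2.sumElim (x.1 : ι →₀ ℕ)) (1:k)))) ∈
            FW k (gen b) W n :=
          sum_mem fun x hx => H.approx (hp x) (hn x hx)
        rw [Finset.sum_sub_distrib, h, zero_sub, neg_mem_iff] at this
        rwa [map_sum]
      obtain ⟨q, hq, hq1⟩ := FW_le_tau goodW n _ h1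
      have h2 := hs hq1
      intro x hx t ht
      have h3 := hn x hx t ht
      by_contra h4
      have h5 : 3 * t.degree + wt x = n := by omega
      obtain ⟨e, u⟩ := x
      rw [Finset.mem_product] at hx
      simp only [hwt, weight_W] at h5
      set j := t.degree + (e : ι →₀ ℕ).degree with hj
      have h6 : homogeneousComponent j (coef u q) = 0 := by
        ext s
        rw [coeff_homogeneousComponent, coeff_zero]
        split_ifs with h7
        · by_contra h8
          rw [coeff_coef] at h8
          have := hq _ h8
          rw [weight_W] at this
          omega
        · rfl
      rw [h2, map_sum, Finset.sum_product] at h6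
      have h7 : ∀ e ∈ s1, (∑ v ∈ s2, coef u (emb (coef 0 (p (e, v))) *
          monomial (v.sumElim (e : ι →₀ ℕ)) (1:k))) =
          coef 0 (p (e, u)) * monomial (e : ι →₀ ℕ) (1:k) := by
        intro e _
        rw [Finset.sum_eq_single u]
        · rw [coef_emb_mul, coef_monomial, if_pos rfl]
        · intro v _ hv
          rw [coef_emb_mul, coef_monomial, if_neg hv, mul_zero]
        · intro h; exact absurd hx.2 h
      rw [Finset.sum_congr rfl h7, map_sum] at h6
      simp_rw [homComp_mul_monomial] at h6
      have h8 := indep_finset hE s1 (fun e => if (e : ι →₀ ℕ).degree ≤ j then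
        homogeneousComponent (j - (e : ι →₀ ℕ).degree) (coef 0 (p (e, u))) else 0) (by
          intro e
          split_ifs
          · exact homComp_invs (H.res_inv (hp _)) _
          · exact zero_mem _) h6 e hx.1
      rw [if_pos (by omega)] at h8
      have h9 := congrArg (coeff t) h8
      rw [coeff_homogeneousComponent, if_pos (by omega), coeff_zero] at h9
      exact ht h9
  choose n hn using fun x : E × (Φ →₀ ℕ) =>
    exists_Fil (w := (fun _ => 3 : ι → ℕ)) (coef 0 (p x))
  have hw3 : ∀ t : ι →₀ ℕ, Finsupp.weight (fun _ => 3 : ι → ℕ) t = 3 * t.degree := by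
    intro t
    rw [Finsupp.weight_apply, Finsupp.sum_fintype _ _ (by simp), Finsupp.degree_eq_sum,
      Finset.mul_sum]
    exact Finset.sum_congr rfl fun _ _ => by simp [mul_comm]
  refine hdown (∑ x ∈ s1 ×ˢ s2, (n x + wt x)) ?_
  intro x hx t ht
  have h1 := hn x t ht
  rw [hw3] at h1
  have h2 := Finset.single_le_sum (f := fun x => n x + wt x) (fun _ _ => Nat.zero_le _) hx
  omega

theorem Rts.main [Finite (reflMonoid rt ct)] (hs : Function.Injective (sym b)) :
    Module.Free (Subalgebra.center k (UniversalEnvelopingAlgebra k L))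
      (UniversalEnvelopingAlgebra k L) := by
  obtain ⟨E, hE1, hE2⟩ := chevalley_free rt ct H.two
  set v : E × (Φ →₀ ℕ) → UniversalEnvelopingAlgebra k L := fun x =>
    sym b (monomial (x.2.sumElim (x.1 : ι →₀ ℕ)) (1:k)) with hv
  have hli : LinearIndependent (Subalgebra.center k (UniversalEnvelopingAlgebra k L)) v := by
    rw [linearIndependent_iff]
    intro l hl
    have hex : ∀ z : Subalgebra.center k (UniversalEnvelopingAlgebra k L),
        ∃ p ∈ Inv b, sym b p = z := by
      intro z
      obtain ⟨p, hp⟩ := sym_surjective b (z : UniversalEnvelopingAlgebra k L)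
      refine ⟨p, ?_, hp⟩
      rw [← sym_mem_center hs, hp]
      exact z.2
    choose P hP hP1 using hex
    rw [Finsupp.linearCombination_apply, Finsupp.sum_of_support_subset (s :=
      (l.support.image Prod.fst) ×ˢ (l.support.image Prod.snd)) l (by
        intro x hx
        rw [Finset.mem_product]
        exact ⟨Finset.mem_image_of_mem _ hx, Finset.mem_image_of_mem _ hx⟩) _ (by simp)] at hl
    have h1 := H.indep_aux hs hE2 _ _ (fun x => P (l x)) (fun x => hP _) (by
      simp_rw [hP1]
      exact hl)
    ext x
    by_cases hx : l x = 0
    · rw [hx]; rfl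
    · have h2 := h1 x (by
        rw [Finset.mem_product]
        exact ⟨Finset.mem_image_of_mem _ (Finsupp.mem_support_iff.mpr hx),
          Finset.mem_image_of_mem _ (Finsupp.mem_support_iff.mpr hx)⟩)
      have h3 := hP1 (l x)
      rw [h2, map_zero] at h3
      rw [← h3]; rfl
  have hsp : ⊤ ≤ Submodule.span (Subalgebra.center k (UniversalEnvelopingAlgebra k L))
      (Set.range v) := by
    intro a _
    obtain ⟨p, rfl⟩ := sym_surjective b a
    obtain ⟨m, hm⟩ := exists_Fil (w := (W : Φ ⊕ ι → ℕ)) p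
    refine H.span_aux hs hE1 _ ?_ m p hm
    intro e he u
    exact Submodule.subset_span ⟨(⟨e, he⟩, u), rfl⟩
  exact Module.Free.of_basis (Module.Basis.mk hli hsp)

end PartD

end KFree

set_option linter.unusedSectionVars false
set_option linter.unusedVariables false
set_option linter.unusedSimpArgs false

namespace KFree
open MvPolynomial

section FinRefl
variable {k : Type*} [Field k] {Φ ι : Type*} [Fintype Φ] [DecidableEq Φ] [Fintype ι] [DecidableEq ι]
  {rt ct : Φ → ι → k}

lemma finite_reflMonoid (σ : Φ → Φ → Φ)
    (hσ : ∀ α β, ct β - dotp (rt α) (ct β) • ct α = ct (σ α β))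
    (hspan : Submodule.span k (Set.range ct) = ⊤) : Finite (reflMonoid rt ct) := by
  have key : ∀ g ∈ reflMonoid rt ct, ∃ τ : Φ → Φ, ∀ β, g (lin (ct β)) = lin (ct (τ β)) := by
    intro g hg
    induction hg using Submonoid.closure_induction with
    | mem x hx =>
      obtain ⟨α, rfl⟩ := hx
      refine ⟨σ α, fun β => ?_⟩
      show shear (rt α) (ct α) (lin (ct β)) = _
      rw [shear_lin, ← hσ, map_sub, map_smul, MvPolynomial.smul_eq_C_mul]
    | one => exact ⟨id, fun β => rfl⟩
    | mul x y _ _ hx hy =>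
      obtain ⟨s, hs⟩ := hx
      obtain ⟨t, ht⟩ := hy
      refine ⟨s ∘ t, fun β => ?_⟩
      show x (y _) = _
      rw [ht, hs]; rfl
  choose f hf using key
  refine Finite.of_injective (fun g : reflMonoid rt ct => f g.1 g.2) ?_
  intro g g' h
  apply Subtype.ext
  have h1 : g.1.toLinearMap.comp lin = g'.1.toLinearMap.comp (lin (k := k) (ι := ι)) := by
    refine LinearMap.ext_on_range (v := ct) hspan ?_
    intro β
    show g.1 (lin (ct β)) = g'.1 (lin (ct β))
    rw [hf _ g.2, hf _ g'.2]
    exact congrArg (fun s : Φ → Φ => lin (ct (s β))) h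
  apply MvPolynomial.algHom_ext
  intro i
  have h2 := LinearMap.congr_fun h1 (Pi.single i 1)
  have h3 : lin (Pi.single i (1:k)) = (X i : MvPolynomial ι k) := by
    show ∑ j, _ = _
    rw [Finset.sum_eq_single i]
    · simp
    · intro j _ hj; simp [hj]
    · simp
  simpa [h3] using h2
end FinRefl

end KFree

set_option linter.unusedSectionVars false
set_option linter.unusedVariables false
set_option linter.unusedSimpArgs false

namespace KFree
open MvPolynomial

section PartE
open LieAlgebra LieAlgebra.IsKilling LieModule Module

variable {k L : Type*} [Field k] [CharZero k] [LieRing L] [LieAlgebra k L]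
  [IsKilling k L] [FiniteDimensional k L]
  (H : LieSubalgebra k L) [H.IsCartanSubalgebra] [IsTriangularizable k H L]

/-- a chosen root vector -/
noncomputable def rv (α : H.root) : L := (α.1.exists_ne_zero).choose

lemma rv_mem (α : H.root) : rv H α ∈ rootSpace H (α.1 : H → k) := (α.1.exists_ne_zero).choose_spec.1
lemma rv_ne (α : H.root) : rv H α ≠ 0 := (α.1.exists_ne_zero).choose_spec.2

lemma rv_span (α : H.root) {x : L} (hx : x ∈ rootSpace H (α.1 : H → k)) : ∃ s : k, s • rv H α = x := by
  have h1 := finrank_rootSpace_eq_one α.1 (LieSubalgebra.isNonZero_coe_root α)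
  obtain ⟨s, hs⟩ := exists_smul_eq_of_finrank_eq_one h1
    (x := (⟨rv H α, rv_mem H α⟩ : rootSpace H (α.1 : H → k)))
    (by intro h; exact rv_ne H α (congrArg Subtype.val h)) ⟨x, hx⟩
  exact ⟨s, congrArg Subtype.val hs⟩

lemma mem_root (χ : Weight k H L) (h : χ.IsNonZero) : χ ∈ H.root := by simpa using h

lemma coe_ne_zero (α : H.root) : (α.1 : H → k) ≠ 0 := LieSubalgebra.isNonZero_coe_root α

/-- the family of root vectors and Cartan elements -/
noncomputable def vfam : H.root ⊕ Fin (finrank k H) → L :=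
  Sum.elim (rv H) (fun i => ((Module.finBasis k H i : H) : L))

lemma mem_root_zero (x : H) : (x : L) ∈ rootSpace H (0 : H → k) := by
  rw [rootSpace_zero_eq k L H]
  exact x.2

lemma root_coe_inj {α β : H.root} (h : (α.1 : H → k) = β.1) : α = β :=
  Subtype.ext (DFunLike.coe_injective h)

lemma vfam_li : LinearIndependent k (vfam H) := by
  have hI : iSupIndep fun χ : H → k => (rootSpace H χ).toSubmodule := by
    exact LieSubmodule.iSupIndep_toSubmodule.mpr (iSupIndep_genWeightSpace k H L)
  refine LinearIndependent.sum_type ?_ ?_ ?_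
  · refine iSupIndep.linearIndependent (fun α : H.root => (rootSpace H (α.1 : H → k)).toSubmodule)
      ?_ (rv_mem H) (rv_ne H)
    exact hI.comp (f := fun α : H.root => (α.1 : H → k)) fun α β h => root_coe_inj H h
  · exact (Module.finBasis k H).linearIndependent.map' H.toSubmodule.subtype
      (Submodule.ker_subtype _)
  · refine ((hI 0).symm).mono ?_ ?_
    · rw [Submodule.span_le]
      rintro _ ⟨α, rfl⟩
      exact Submodule.mem_iSup_of_mem (α.1 : H → k)
        (Submodule.mem_iSup_of_mem (coe_ne_zero H α) (rv_mem H α))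
    · rw [Submodule.span_le]
      rintro _ ⟨i, rfl⟩
      exact mem_root_zero H _

lemma vfam_span : ⊤ ≤ Submodule.span k (Set.range (vfam H)) := by
  have h1 := congrArg LieSubmodule.toSubmodule (iSup_genWeightSpace_eq_top' k H L)
  rw [LieSubmodule.iSup_toSubmodule, LieSubmodule.top_toSubmodule] at h1
  rw [← h1]
  refine iSup_le fun χ => ?_
  intro x hx
  by_cases hχ : χ.IsZero
  · have hx' : x ∈ rootSpace H (0 : H → k) := by
      have : (χ : H → k) = 0 := hχ
      rw [← this]; exact hx
    rw [rootSpace_zero_eq k L H] at hx'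
    have hx2 : x ∈ H := hx'
    have h3 := (Module.finBasis k H).sum_repr ⟨x, hx2⟩
    have h4 := congrArg H.toSubmodule.subtype h3
    rw [map_sum] at h4
    have h5 : H.toSubmodule.subtype ⟨x, hx2⟩ = x := rfl
    rw [h5] at h4
    rw [← h4]
    refine Submodule.sum_mem _ fun i _ => ?_
    rw [map_smul]
    exact Submodule.smul_mem _ _ (Submodule.subset_span ⟨.inr i, rfl⟩)
  · obtain ⟨s, rfl⟩ := rv_span H ⟨χ, mem_root H χ hχ⟩ hx
    exact Submodule.smul_mem _ _ (Submodule.subset_span ⟨.inl _, rfl⟩)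

/-- root basis of the Lie algebra -/
noncomputable def rb : Basis (H.root ⊕ Fin (finrank k H)) k L :=
  Basis.mk (vfam_li H) (vfam_span H)

@[simp] lemma rb_inl (α : H.root) : rb H (.inl α) = rv H α := by simp [rb, vfam]
@[simp] lemma rb_inr (i) : rb H (.inr i) = ((Module.finBasis k H i : H) : L) := by simp [rb, vfam]

/-- coordinates of roots -/
noncomputable def rrt (α : H.root) (i : Fin (finrank k H)) : k := α.1 (Module.finBasis k H i)
/-- coordinates of coroots -/
noncomputable def rct (α : H.root) : Fin (finrank k H) → k := (Module.finBasis k H).equivFun (coroot α.1)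
/-- negation of roots -/
noncomputable def rneg (α : H.root) : H.root :=
  ⟨-α.1, mem_root H _ (LieSubalgebra.isNonZero_coe_root α).neg⟩

lemma rdot (α : H.root) (x : H) :
    dotp (rrt H α) ((Module.finBasis k H).equivFun x) = α.1 x := by
  conv_rhs => rw [← (Module.finBasis k H).sum_equivFun x]
  show _ = Weight.toLinear k H L α.1 _
  rw [map_sum]
  refine Finset.sum_congr rfl fun i _ => ?_
  rw [map_smul, smul_eq_mul, mul_comm]; rfl

lemma rrt_eq {f g : H.root} {γ : H.root}
    (h : rrt H γ = rrt H f + rrt H g) : (γ.1 : H → k) = f.1 + g.1 := by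
  have : γ.1.toLinear = f.1.toLinear + g.1.toLinear := by
    refine (Module.finBasis k H).ext fun i => ?_
    exact congrFun h i
  funext x
  exact LinearMap.congr_fun this x

lemma rrt_smul {f g : H.root} {a : k} (h : rrt H f = a • rrt H g) : (f.1 : H → k) = a • g.1 := by
  have : f.1.toLinear = a • g.1.toLinear := by
    refine (Module.finBasis k H).ext fun i => ?_
    exact congrFun h i
  funext x
  exact LinearMap.congr_fun this x

lemma rct_smul {α β : H.root} {a : k} (h : rct H β = a • rct H α) :
    ∃ c : k, (β.1 : H → k) = c • α.1 := by
  have h1 : coroot β.1 = a • coroot α.1 := by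
    apply (Module.finBasis k H).equivFun.injective
    rw [map_smul]; exact h
  have hb := root_apply_cartanEquivDual_symm_ne_zero (LieSubalgebra.isNonZero_coe_root β)
  set u := (β.1 <| (cartanEquivDual H).symm β.1) with hu
  set v := (α.1 <| (cartanEquivDual H).symm α.1) with hv
  refine ⟨u * a * v⁻¹, ?_⟩
  funext x
  have h2 := traceForm_coroot β.1 x
  rw [h1, map_smul, LinearMap.smul_apply, traceForm_coroot α.1 x, ← hu, ← hv] at h2
  simp only [nsmul_eq_mul, smul_eq_mul] at h2
  simp only [Pi.smul_apply, smul_eq_mul]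
  have h3 : (2 : k) ≠ 0 := two_ne_zero
  push_cast at h2
  have h4 : u⁻¹ * β.1 x = a * (v⁻¹ * α.1 x) := by
    apply mul_left_cancel₀ h3; rw [← h2]; ring
  calc β.1 x = u * (u⁻¹ * β.1 x) := by rw [mul_inv_cancel_left₀ hb]
    _ = _ := by rw [h4]; ring

lemma eq_or_of_smul {α β : H.root} {a : k} (h : (β.1 : H → k) = a • α.1) :
    β = rneg H α ∨ β = α := by
  rcases eq_neg_or_eq_of_eq_smul α.1 β.1 (LieSubalgebra.isNonZero_coe_root β) a h with h | h
  · exact .inl (Subtype.ext h)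
  · exact .inr (Subtype.ext h)

lemma bracket_neg (α : H.root) :
    ∃ c : k, c ≠ 0 ∧ ⁅rv H (rneg H α), rv H α⁆ = c • (coroot α.1 : L) := by
  have hα := LieSubalgebra.isNonZero_coe_root α
  obtain ⟨h, e, f, ht, he, hf⟩ := exists_isSl2Triple_of_weight_isNonZero hα
  have hh := ht.h_eq_coroot hα he hf
  obtain ⟨s, hs⟩ := rv_span H α he
  obtain ⟨t, htt⟩ := rv_span H (rneg H α) (x := f) (by simpa [rneg] using hf)
  have h1 : ⁅e, f⁆ = h := ht.lie_e_f
  rw [← hs, ← htt, smul_lie, lie_smul, hh, ← lie_skew, smul_neg, smul_neg, smul_smul] at h1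
  have hst : s * t ≠ 0 := by
    intro h0
    rw [h0, zero_smul, neg_zero] at h1
    exact ht.h_ne_zero (by rw [hh, ← h1])
  refine ⟨-(s * t)⁻¹, neg_ne_zero.mpr (inv_ne_zero hst), ?_⟩
  rw [← h1, neg_smul, smul_neg, neg_neg, smul_smul, inv_mul_cancel₀ hst, one_smul]

/-- structure constants -/
noncomputable def rc (α : H.root) : k := (bracket_neg H α).choose

theorem rts : Rts (rb H) (rrt H) (rct H) (rneg H) (rc H) where
  neg_neg α := Subtype.ext (neg_neg α.1)
  neg_ne α h := by
    apply coe_ne_zero H α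
    have h1 : ((-α.1 : Weight k H L) : H → k) = α.1 := congrArg (fun b : H.root => (b.1 : H → k)) h
    rw [Weight.coe_neg] at h1
    funext x
    have := congrFun h1 x
    simp only [Pi.neg_apply] at this
    simpa using neg_eq_self.mp this
  rt_neg α := by
    funext i
    simp [rrt, rneg]
  h_h i j := by
    rw [rb_inr, rb_inr, ← LieSubalgebra.coe_bracket, trivial_lie_zero]; rfl
  h_e i α := by
    rw [rb_inr, rb_inl]
    exact lie_eq_smul_of_mem_rootSpace (rv_mem H α) _
  c_ne α := (bracket_neg H α).choose_spec.1
  e_neg α := by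
    rw [rb_inl, rb_inl, (bracket_neg H α).choose_spec.2]
    congr 1
    have h := congrArg H.toSubmodule.subtype ((Module.finBasis k H).sum_equivFun (coroot α.1))
    rw [map_sum] at h
    have h5 : H.toSubmodule.subtype (coroot α.1) = (coroot α.1 : L) := rfl
    rw [← h5, ← h]
    refine Finset.sum_congr rfl fun i _ => ?_
    rw [map_smul, rb_inr]; rfl
  e_e α β hβ x hx := by
    rw [rb_inl, rb_inl] at hx
    have hm : ⁅rv H α, rv H β⁆ ∈ rootSpace H ((α.1 : H → k) + β.1) :=
      lie_mem_genWeightSpace_of_mem_genWeightSpace (rv_mem H α) (rv_mem H β)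
    have hne : ⁅rv H α, rv H β⁆ ≠ 0 := by
      intro h; rw [h] at hx; simp at hx
    let γ : Weight k H L := ⟨(α.1 : H → k) + β.1, by
      intro h
      have h' : rootSpace H ((α.1 : H → k) + β.1) = ⊥ := h
      rw [h'] at hm; exact hne (by simpa using hm)⟩
    have hγ : γ.IsNonZero := by
      intro h
      apply hβ
      have h0 : (α.1 : H → k) + β.1 = 0 := h
      apply root_coe_inj
      show (β.1 : H → k) = ((-α.1 : Weight k H L) : H → k)
      rw [Weight.coe_neg]
      exact (neg_eq_of_add_eq_zero_right h0).symm
    obtain ⟨s, hs⟩ := rv_span H ⟨γ, mem_root H γ hγ⟩ hm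
    refine ⟨⟨γ, mem_root H γ hγ⟩, ?_, ?_⟩
    · rw [← hs, ← rb_inl, map_smul, Basis.repr_self] at hx
      by_contra hc
      apply hx
      simp [Finsupp.single_apply, Ne.symm hc]
    · rfl
  two α := by
    rw [rct, rdot]; exact root_apply_coroot (LieSubalgebra.isNonZero_coe_root α)
  nonprop α β h1 h2 a h := by
    obtain ⟨c, hc⟩ := rct_smul H h
    rcases eq_or_of_smul H hc with h | h
    · exact h2 h
    · exact h1 h
  not_two α β h := by
    have hc := rrt_smul H h
    have hz : ∀ x, α.1 x = 0 := by
      intro x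
      have h3 := congrFun hc x
      rcases eq_or_of_smul H hc with h | h
      · rw [h] at h3
        simp only [rneg, Weight.coe_neg, Pi.neg_apply, Pi.smul_apply, smul_eq_mul] at h3
        have : (3 : k) * α.1 x = 0 := by linear_combination -h3
        simpa using this
      · rw [h] at h3
        simp only [Pi.smul_apply, smul_eq_mul] at h3
        linear_combination -h3
    exact coe_ne_zero H α (funext hz)

lemma rfin [DecidableEq H.root] : Finite (reflMonoid (rrt H) (rct H)) := by
  refine finite_reflMonoid (fun α β => (rootSystem H).reflectionPerm α β) ?_ ?_
  · intro α β
    have h1 := (rootSystem H).coroot_reflectionPerm α β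
    rw [RootPairing.coreflection_apply] at h1
    conv_lhs => rw [rct, rdot, ← rct]
    have h2 := congrArg (Module.finBasis k H).equivFun h1
    rw [map_sub, map_smul] at h2
    exact h2.symm
  · have h1 : Submodule.span k (Set.range (rootSystem H).coroot) = ⊤ :=
      RootPairing.IsRootSystem.span_coroot_eq_top
    have h2 := congrArg (Submodule.map (Module.finBasis k H).equivFun.toLinearMap) h1
    rw [Submodule.map_span, Submodule.map_top, LinearEquiv.range, ← Set.range_comp] at h2
    exact h2

end PartE

end KFree

/-- Kostant's freeness theorem: for a finite-dimensional semisimple Lie algebra `𝔤` over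
an algebraically closed field of characteristic zero, the universal enveloping algebra
`U(𝔤)` is free (in particular flat) as a module over its center `Z(𝔤)`. -/
theorem enveloping_algebra_free_over_center
    (k L : Type*) [Field k] [CharZero k] [IsAlgClosed k]
    [LieRing L] [LieAlgebra k L] [FiniteDimensional k L] [LieAlgebra.IsSemisimple k L] :
    Module.Free (Subalgebra.center k (UniversalEnvelopingAlgebra k L))
      (UniversalEnvelopingAlgebra k L) := by
  classical
  have : LieAlgebra.IsKilling k L := inferInstance
  have : Infinite k := IsAlgClosed.instInfinite
  obtain ⟨x, hx⟩ := LieAlgebra.exists_isCartanSubalgebra_engel k L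
  let H := LieSubalgebra.engel k x
  have : H.IsCartanSubalgebra := hx
  have := KFree.rfin H
  refine (KFree.rts H).main (KFree.sym_injective (KFree.rb H) ?_)
  intro x hx
  have hc := LieAlgebra.center_eq_bot k L
  have : x ∈ LieAlgebra.center k L := by
    intro y
    rw [← lie_skew, hx, neg_zero]
  rw [hc] at this
  simpa using this
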